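/- arXiv:1805.08965 — 2 statements merged into one kernel-verified Lean document; each statement's English description precedes it below -/
import Mathlib

section
/- Let p be a prime and G a p-group (every element of G has order a power of p; G may be infinite). Then G is a cut-group if and only if one of the following holds: (i) p = 2 and for every a ∈ Φ⁺(G), a³ is conjugate in G to a or to a⁻¹; (ii) p = 3 and for every a ∈ Φ⁺(G), a² is conjugate in G to a⁻¹; (iii) Φ⁺(G) = {1}. -/
/-- A group `G` is a *cut-group* if every central unit of the integral group ring `ℤ[G]`
is trivial, i.e. of the form `±g` for some `g ∈ G`. -/
def IsCutGroup (G : Type*) [Group G] : Prop :=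
  ∀ u : (MonoidAlgebra ℤ G)ˣ,
    (u : MonoidAlgebra ℤ G) ∈ Subring.center (MonoidAlgebra ℤ G) →
    ∃ g : G, (u : MonoidAlgebra ℤ G) = MonoidAlgebra.of ℤ G g ∨
      (u : MonoidAlgebra ℤ G) = -(MonoidAlgebra.of ℤ G g)

/-- `Φ⁺(G)`: the set of torsion elements of `G` having only finitely many conjugates
in `G` (the torsion part of the FC-subgroup of `G`). -/
def FCTorsion (G : Type*) [Group G] : Set G :=
  {g : G | {h : G | IsConj g h}.Finite ∧ IsOfFinOrder g}

/-- Dietzmann -/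
theorem cut_finite_closure {G : Type*} [Group G] (hT : ∀ g : G, IsOfFinOrder g) (S : Set G)
    (hS : S.Finite) (hc : ∀ g : G, ∀ s ∈ S, g * s * g⁻¹ ∈ S) :
    Finite (Subgroup.closure S) := by
  classical
  have : Finite S := hS
  let N := Subgroup.closure S
  let φ : G →* Equiv.Perm S :=
    { toFun := fun g =>
        { toFun := fun s => ⟨g * s * g⁻¹, hc g s s.2⟩
          invFun := fun s => ⟨g⁻¹ * s * g, by simpa using hc g⁻¹ s s.2⟩
          left_inv := fun s => by ext; simp [mul_assoc]
          right_inv := fun s => by ext; simp [mul_assoc] }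
      map_one' := by ext; simp
      map_mul' := fun g h => by ext; simp [mul_assoc] }
  let ψ : N →* Equiv.Perm S := φ.comp N.subtype
  have hk : ∀ x ∈ ψ.ker, ∀ y : N, x * y = y * x := by
    intro x hx y
    have hx' : ∀ s ∈ S, (x : G) * s * (x : G)⁻¹ = s := by
      intro s hs
      have := congrArg (fun f => ((f ⟨s, hs⟩ : S) : G)) (MonoidHom.mem_ker.1 hx)
      simpa [ψ, φ] using this
    have h1 : N ≤ Subgroup.centralizer {(x : G)} := by
      refine (Subgroup.closure_le _).2 fun s hs => ?_
      rw [SetLike.mem_coe, Subgroup.mem_centralizer_iff]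
      intro h hh
      rw [Set.mem_singleton_iff.1 hh]
      exact mul_inv_eq_iff_eq_mul.1 (hx' s hs)
    have := Subgroup.mem_centralizer_iff.1 (h1 y.2) _ rfl
    exact Subtype.ext this
  have hfg : Group.FG N := Group.closure_finite_fg S
  have hfg2 : Group.FG ψ.ker := inferInstance
  let _ : CommGroup ψ.ker :=
    { (inferInstance : Group ψ.ker) with
      mul_comm := fun a b => Subtype.ext (hk a a.2 b) }
  have hfin : Finite ψ.ker := by
    apply CommGroup.finite_of_fg_isMulTorsion
    intro x
    obtain ⟨n, hn, hx⟩ := isOfFinOrder_iff_pow_eq_one.1 (hT (((x : N) : G)))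
    refine isOfFinOrder_iff_pow_eq_one.2 ⟨n, hn, ?_⟩
    exact Subtype.ext (Subtype.ext hx)
  have : Finite (N ⧸ ψ.ker) := Subgroup.finite_quotient_of_finiteIndex
  exact Finite.of_equiv _ (Subgroup.groupEquivQuotientProdSubgroup (s := ψ.ker)).symm

theorem cut_conj_pow {p : ℕ} (hp : p.Prime) {G : Type*} [Group G] (hG : IsPGroup p G) {a : G}
    (ha : a ≠ 1) (i k : ℤ) (h : IsConj (a ^ i) (a ^ k)) : (i : ZMod p) = k := by
  have := Fact.mk hp
  obtain ⟨g, hg⟩ := isConj_iff.1 h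
  have key : ∀ s : ℕ, g ^ s * a ^ (i ^ s) * (g ^ s)⁻¹ = a ^ (k ^ s) := by
    intro s
    induction s with
    | zero => simp
    | succ s ih =>
      have e1 : g ^ (s+1) * a ^ (i ^ (s+1)) * (g ^ (s+1))⁻¹
          = g * (g ^ s * a ^ (i ^ s) * (g ^ s)⁻¹) ^ i * g⁻¹ := by
        rw [conj_zpow, ← zpow_mul, ← pow_succ i, pow_succ' g]; group
      rw [e1, ih, ← zpow_mul, mul_comm, zpow_mul, ← conj_zpow, hg, ← zpow_mul, ← pow_succ']
  obtain ⟨r, hr⟩ := isPGroup_iff_pow_pow_eq_one.1 hG g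
  have h2 := key (p ^ r)
  rw [hr] at h2
  simp only [one_mul, inv_one, mul_one] at h2
  have h3 : (p : ℤ) ∣ i ^ p ^ r - k ^ p ^ r := by
    refine (Int.natCast_dvd_natCast.2 (hG.dvd_orderOf ha)).trans ?_
    rw [orderOf_dvd_iff_zpow_eq_one, zpow_sub, h2, mul_inv_cancel]
  have h4 := (ZMod.intCast_zmod_eq_zero_iff_dvd _ p).2 h3
  push_cast at h4
  rwa [ZMod.pow_card_pow, ZMod.pow_card_pow, sub_eq_zero] at h4

theorem cut_pow_gen {p : ℕ} (hp : p.Prime) (m : ℕ) (hm0 : m ≠ 0) (hpm : m + 2 ≤ p * m) (n : ℕ)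
    (y : ℤ) : ∃ i : ℕ, ((1 + p ^ m * (-1 : ℤ) : ZMod (p ^ (n + m)))) ^ i = 1 + p ^ m * (y : ZMod (p ^ (n + m))) := by
  classical
  have hpos : 0 < p := hp.pos
  have : NeZero (p ^ (n + m)) := ⟨by positivity⟩
  set b : ZMod (p ^ (n + m)) := (1 + p ^ m * (-1 : ℤ) : ZMod (p ^ (n + m))) with hb
  have ho : orderOf b = p ^ n := ZMod.orderOf_one_add_mul_prime_pow hp m hm0 hpm (-1)
    (by rw [Int.dvd_neg]; intro h; have := Int.natCast_dvd_natCast.1 (by simpa using h : ((p:ℕ):ℤ) ∣ ((1:ℕ):ℤ)); exact hp.one_lt.ne' (Nat.dvd_one.1 this)) n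
  let T : Finset (ZMod (p ^ (n + m))) := (Finset.range (p ^ n)).image fun y : ℕ => 1 + p ^ m * (y : ZMod (p ^ (n + m)))
  have hpz : (p : ZMod (p ^ (n + m))) ^ m * (p : ZMod (p ^ (n + m))) ^ n = 0 := by
    rw [← pow_add, add_comm m n]; exact_mod_cast ZMod.natCast_self (p ^ (n+m))
  have hmem : ∀ y : ℤ, 1 + p ^ m * (y : ZMod (p ^ (n + m))) ∈ T := by
    intro y
    refine Finset.mem_image.2 ⟨(y % (p ^ n : ℕ)).toNat, ?_, ?_⟩
    · rw [Finset.mem_range]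
      have h1 := Int.emod_lt_of_pos y (b := (p ^ n : ℕ)) (by positivity)
      have h2 := Int.emod_nonneg y (b := (p ^ n : ℕ)) (by positivity)
      omega
    · have h2 := Int.emod_nonneg y (b := (p ^ n : ℕ)) (by positivity)
      have h3 : (((y % (p ^ n : ℕ)).toNat : ℕ) : ZMod (p ^ (n + m))) = ((y % (p ^ n : ℕ) : ℤ) : ZMod (p ^ (n + m))) := by
        rw [← Int.cast_natCast, Int.toNat_of_nonneg h2]
      have h4 : (y : ZMod (p ^ (n + m))) = ((y % (p ^ n : ℕ) : ℤ) : ZMod (p ^ (n + m))) + p ^ n * ((y / (p ^ n : ℕ) : ℤ) : ZMod (p ^ (n + m))) := by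
        have := Int.emod_add_mul_ediv y (p ^ n : ℕ)
        nth_rewrite 1 [← this]
        push_cast; ring
      rw [h3, h4]
      linear_combination (-((y / (p ^ n : ℕ) : ℤ) : ZMod (p ^ (n + m)))) * hpz
  have hbT : ∀ i : ℕ, b ^ i ∈ T := by
    intro i
    have : ∃ y : ℤ, b ^ i = 1 + p ^ m * (y : ZMod (p ^ (n + m))) := by
      induction i with
      | zero => exact ⟨0, by simp⟩
      | succ i ih =>
        obtain ⟨y, hy⟩ := ih
        refine ⟨y - 1 - p ^ m * y, ?_⟩
        rw [pow_succ, hy, hb]; push_cast; ring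
    obtain ⟨y, hy⟩ := this
    rw [hy]; exact hmem y
  have hsub : (Finset.range (p ^ n)).image (fun i => b ^ i) ⊆ T := by
    intro x hx
    obtain ⟨i, -, rfl⟩ := Finset.mem_image.1 hx
    exact hbT i
  have hcard : T.card ≤ ((Finset.range (p ^ n)).image (fun i => b ^ i)).card := by
    rw [Finset.card_image_of_injOn (f := fun i => b ^ i)]
    · exact Finset.card_image_le
    · intro i hi j hj hij
      have hu : IsOfFinOrder b := by rw [← orderOf_pos_iff, ho]; positivity
      simp only [Finset.coe_range, Set.mem_Iio] at hi hj
      rw [← ho] at hi hj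
      exact pow_injOn_Iio_orderOf hi hj hij
  have := Finset.eq_of_subset_of_card_le hsub hcard
  have h5 := hmem y
  rw [← this] at h5
  obtain ⟨i, -, hi⟩ := Finset.mem_image.1 h5
  exact ⟨i, hi⟩

theorem FCTorsion_zpow {G : Type*} [Group G] {a : G} (ha : a ∈ FCTorsion G) (j : ℤ) :
    a ^ j ∈ FCTorsion G := by
  refine ⟨(ha.1.image (fun x => x ^ j)).subset ?_, ha.2.zpow⟩
  intro h hh
  obtain ⟨g, hg⟩ := isConj_iff.1 hh
  exact ⟨g * a * g⁻¹, isConj_iff.2 ⟨g, rfl⟩, by rw [← hg]; exact conj_zpow⟩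

theorem isConj_zpow {G : Type*} [Group G] {a b : G} (h : IsConj a b) (j : ℤ) :
    IsConj (a ^ j) (b ^ j) := by
  obtain ⟨g, hg⟩ := isConj_iff.1 h
  exact isConj_iff.2 ⟨g, by rw [← hg]; exact conj_zpow.symm⟩

/-- `a ^ j` is conjugate to `a` or its inverse, for all torsion FC elements -/
def PowConj (G : Type*) [Group G] (j : ℤ) : Prop :=
  ∀ a ∈ FCTorsion G, IsConj (a ^ j) a ∨ IsConj (a ^ j) a⁻¹

theorem PowConj.mul {G : Type*} [Group G] {i j : ℤ} (hi : PowConj G i) (hj : PowConj G j) :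
    PowConj G (i * j) := by
  intro a ha
  rw [zpow_mul]
  rcases hj _ (FCTorsion_zpow ha i) with h | h <;> rcases hi a ha with h' | h'
  · exact Or.inl (h.trans h')
  · exact Or.inr (h.trans h')
  · refine Or.inr (h.trans ?_)
    simpa using isConj_zpow h' (-1)
  · refine Or.inl (h.trans ?_)
    simpa using isConj_zpow h' (-1)

theorem PowConj.pow {G : Type*} [Group G] {i : ℤ} (hi : PowConj G i) (n : ℕ) :
    PowConj G (i ^ n) := by
  induction n with
  | zero => intro a _; left; rw [pow_zero, zpow_one]
  | succ n ih => rw [pow_succ]; exact ih.mul hi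

theorem PowConj.neg {G : Type*} [Group G] {i : ℤ} (hi : PowConj G i) :
    PowConj G (-i) := by
  intro a ha
  rw [zpow_neg]
  rcases hi a ha with h' | h'
  · right; simpa using isConj_zpow h' (-1)
  · left; simpa using isConj_zpow h' (-1)

theorem powConj_of_gen {p : ℕ} (hp : p.Prime) {G : Type*} [Group G] (hG : IsPGroup p G)
    (m : ℕ) (hm0 : m ≠ 0) (hpm : m + 2 ≤ p * m) (hb : PowConj G (1 - p ^ m)) (y : ℤ) :
    PowConj G (1 + p ^ m * y) := by
  intro a ha
  obtain ⟨n, hn⟩ := isPGroup_iff_pow_pow_eq_one.1 hG a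
  obtain ⟨i, hi⟩ := cut_pow_gen hp m hm0 hpm n y
  have h1 : (((1 - p ^ m : ℤ) ^ i - (1 + p ^ m * y) : ℤ) : ZMod (p ^ (n + m))) = 0 := by
    push_cast at hi ⊢
    rw [← hi]; ring
  rw [ZMod.intCast_zmod_eq_zero_iff_dvd] at h1
  have h2 : a ^ (1 + p ^ m * y) = a ^ ((1 - p ^ m : ℤ) ^ i) := by
    have : a ^ ((1 - p ^ m : ℤ) ^ i - (1 + p ^ m * y)) = 1 := by
      rw [← orderOf_dvd_iff_zpow_eq_one]
      refine dvd_trans ?_ h1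
      rw [Int.natCast_dvd_natCast]
      refine dvd_trans (orderOf_dvd_of_pow_eq_one hn) ?_
      exact pow_dvd_pow _ (by omega)
    rw [zpow_sub, mul_inv_eq_one] at this
    exact this.symm
  rw [h2]
  exact hb.pow i a ha

theorem powConj_all {p : ℕ} (hp : p.Prime) {G : Type*} [Group G] (hG : IsPGroup p G)
    (H : (p = 2 ∧ ∀ a ∈ FCTorsion G, IsConj (a ^ 3) a ∨ IsConj (a ^ 3) a⁻¹) ∨
      (p = 3 ∧ ∀ a ∈ FCTorsion G, IsConj (a ^ 2) a⁻¹) ∨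
      FCTorsion G = {1}) (j : ℤ) (hj : ¬ (p : ℤ) ∣ j) : PowConj G j := by
  rcases H with ⟨rfl, h⟩ | ⟨rfl, h⟩ | h
  · have h3 : PowConj G 3 := fun a ha => by
      have := h a ha
      exact_mod_cast this
    have hm : PowConj G (1 - (2:ℕ) ^ 2) := by simpa using h3.neg
    have := powConj_of_gen hp hG 2 (by norm_num) (by norm_num) hm
    have hj2 : j % 4 = 1 ∨ j % 4 = 3 := by push_cast at hj; omega
    rcases hj2 with h4 | h4
    · have := this (j / 4)
      push_cast at this
      rwa [show 1 + 4 * (j / 4) = j by omega] at this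
    · have := (this (- j / 4)).neg
      push_cast at this
      rwa [show -(1 + 4 * (-j / 4)) = j by omega] at this
  · have h3 : PowConj G 2 := fun a ha => by
      have := h a ha
      right
      exact_mod_cast this
    have hm : PowConj G (1 - (3:ℕ) ^ 1) := by simpa using h3.neg
    have := powConj_of_gen hp hG 1 (by norm_num) (by norm_num) hm
    have hj2 : j % 3 = 1 ∨ j % 3 = 2 := by push_cast at hj; omega
    rcases hj2 with h4 | h4
    · have := this (j / 3)
      push_cast at this
      rwa [show 1 + 3 * (j / 3) = j by omega] at this
    · have := (this (- j / 3)).neg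
      push_cast at this
      rwa [show -(1 + 3 * (-j / 3)) = j by omega] at this
  · intro a ha
    rw [h] at ha
    rw [Set.mem_singleton_iff.1 ha]
    simp

theorem cond_of_powConj {p : ℕ} (hp : p.Prime) {G : Type*} [Group G] (hG : IsPGroup p G)
    (H : ∀ j : ℕ, ¬ p ∣ j → PowConj G j) :
    (p = 2 ∧ ∀ a ∈ FCTorsion G, IsConj (a ^ 3) a ∨ IsConj (a ^ 3) a⁻¹) ∨
      (p = 3 ∧ ∀ a ∈ FCTorsion G, IsConj (a ^ 2) a⁻¹) ∨
      FCTorsion G = {1} := by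
  by_cases h2 : p = 2
  · left
    refine ⟨h2, fun a ha => ?_⟩
    have := H 3 (by rw [h2]; norm_num) a ha
    exact_mod_cast this
  right
  have h2' : ¬ p ∣ 2 := fun h => h2 ((Nat.prime_dvd_prime_iff_eq hp Nat.prime_two).1 h)
  have key : ∀ a ∈ FCTorsion G, a ≠ 1 → IsConj (a ^ 2) a⁻¹ ∧ p = 3 := by
    intro a ha ha1
    rcases H 2 h2' a ha with h | h
    · exfalso
      have := cut_conj_pow hp hG ha1 2 1 (by simpa using h)
      have h5 : ((1 : ℕ) : ZMod p) = 0 := by push_cast at this ⊢; linear_combination this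
      rw [ZMod.natCast_eq_zero_iff] at h5
      exact hp.one_lt.ne' (Nat.dvd_one.1 h5)
    · refine ⟨by exact_mod_cast h, ?_⟩
      have := cut_conj_pow hp hG ha1 2 (-1) (by simpa using h)
      have h5 : ((3 : ℕ) : ZMod p) = 0 := by push_cast at this ⊢; linear_combination this
      rw [ZMod.natCast_eq_zero_iff] at h5
      exact (Nat.prime_dvd_prime_iff_eq hp Nat.prime_three).1 h5
  by_cases h3 : p = 3
  · left
    refine ⟨h3, fun a ha => ?_⟩
    by_cases ha1 : a = 1
    · simp [ha1]
    · exact (key a ha ha1).1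
  · right
    ext a
    rw [Set.mem_singleton_iff]
    constructor
    · intro ha
      by_contra ha1
      exact h3 (key a ha ha1).2
    · rintro rfl
      refine ⟨?_, IsOfFinOrder.one⟩
      refine (Set.finite_singleton (1:G)).subset ?_
      intro h hh
      exact (isConj_one_right.1 hh)

open Matrix in
/-- group matrix -/
def gmat {N : Type*} [Group N] {R : Type*} (x : N → R) : Matrix N N R :=
  Matrix.of fun g h => x (g * h⁻¹)

theorem gmat_apply {N : Type*} [Group N] {R : Type*} (x : N → R) (g h : N) :
    gmat x g h = x (g * h⁻¹) := rfl

theorem gmat_injective {N : Type*} [Group N] {R : Type*} {x y : N → R} (h : gmat x = gmat y) :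
    x = y := by
  ext n
  have := congrFun (congrFun h n) 1
  simpa [gmat_apply] using this

theorem gmat_one {N : Type*} [Group N] [DecidableEq N] {R : Type*} [Zero R] [One R] :
    gmat (Pi.single (1 : N) (1 : R)) = 1 := by
  ext g h
  rw [gmat_apply, Matrix.one_apply, Pi.single_apply]
  simp [mul_inv_eq_one]

theorem gmat_mul {N : Type*} [Group N] [Fintype N] {R : Type*} [CommRing R] (x y : N → R) :
    gmat x * gmat y = gmat (fun n => ∑ k, x (n * k⁻¹) * y k) := by
  ext g h
  rw [Matrix.mul_apply, gmat_apply]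
  refine Fintype.sum_equiv (Equiv.mulRight h⁻¹) _ _ fun k => ?_
  simp [gmat_apply]

/-- element of the group ring of `G` attached to a function on a finite subgroup -/
noncomputable def toG {G : Type*} [Group G] (N : Subgroup G) [Fintype N] (x : N → ℤ) :
    MonoidAlgebra ℤ G := ∑ n : N, MonoidAlgebra.single (n : G) (x n)

theorem toG_coeff {G : Type*} [Group G] (N : Subgroup G) [Fintype N] (x : N → ℤ) (n : N) :
    (toG N x).coeff (n : G) = x n := by
  classical
  simp [toG, MonoidAlgebra.coeff_sum, Finsupp.finset_sum_apply, Finsupp.single_apply]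

theorem toG_coeff_not {G : Type*} [Group G] (N : Subgroup G) [Fintype N] (x : N → ℤ) (g : G)
    (hg : g ∉ N) : (toG N x).coeff g = 0 := by
  classical
  rw [toG, MonoidAlgebra.coeff_sum, Finsupp.finset_sum_apply]
  refine Finset.sum_eq_zero fun n _ => ?_
  rw [MonoidAlgebra.coeff_single, Finsupp.single_apply, if_neg]
  rintro rfl
  exact hg n.2

theorem toG_injective {G : Type*} [Group G] (N : Subgroup G) [Fintype N] {x y : N → ℤ}
    (h : toG N x = toG N y) : x = y := by
  ext n
  rw [← toG_coeff N x, h, toG_coeff]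

theorem eq_toG {G : Type*} [Group G] (N : Subgroup G) [Fintype N] (u : MonoidAlgebra ℤ G)
    (hu : ∀ g, u.coeff g ≠ 0 → g ∈ N) : u = toG N (fun n => u.coeff (n : G)) := by
  ext g
  by_cases hg : g ∈ N
  · exact (toG_coeff N (fun n => u.coeff (n : G)) ⟨g, hg⟩).symm
  · rw [toG_coeff_not N _ g hg]
    by_contra h
    exact hg (hu g h)

theorem toG_mul {G : Type*} [Group G] (N : Subgroup G) [Fintype N] (x y w : N → ℤ)
    (h : gmat x * gmat y = gmat w) : toG N x * toG N y = toG N w := by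
  rw [gmat_mul] at h
  rw [← gmat_injective h]
  simp only [toG, Finset.sum_mul_sum, MonoidAlgebra.single_mul_single]
  rw [Finset.sum_comm]
  have : ∀ n : N, MonoidAlgebra.single (n : G) (∑ k, x (n * k⁻¹) * y k)
      = ∑ k, MonoidAlgebra.single (n : G) (x (n * k⁻¹) * y k) := by
    intro n
    exact map_sum (MonoidAlgebra.singleAddHom (n : G)) _ _
  simp only [this]
  rw [Finset.sum_comm (f := fun n k => MonoidAlgebra.single ((n : N) : G) (x (n * k⁻¹) * y k))]
  refine Finset.sum_congr rfl fun k _ => ?_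
  refine Fintype.sum_equiv (Equiv.mulRight k) _ _ fun n => ?_
  simp

theorem gmat_of_toG_mul {G : Type*} [Group G] (N : Subgroup G) [Fintype N] (x y w : N → ℤ)
    (h : toG N x * toG N y = toG N w) : gmat x * gmat y = gmat w := by
  rw [toG_mul N x y _ (gmat_mul x y)] at h
  rw [gmat_mul, toG_injective N h]

theorem toG_one {G : Type*} [Group G] (N : Subgroup G) [Fintype N] [DecidableEq N] :
    toG N (Pi.single 1 1) = 1 := by
  rw [toG, Finset.sum_eq_single 1]
  · simp [MonoidAlgebra.one_def]
  · intro b _ hb; simp [hb]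
  · simp

theorem toG_center {G : Type*} [Group G] (N : Subgroup G) [N.Normal] [Fintype N] (x : N → ℤ)
    (hx : ∀ (g : G) (n : N), x (MulAut.conjNormal g n) = x n) :
    toG N x ∈ Subring.center (MonoidAlgebra ℤ G) := by
  have h1 : ∀ (g : G) (r : ℤ), MonoidAlgebra.single g r * toG N x = toG N x * MonoidAlgebra.single g r := by
    intro g r
    simp only [toG, Finset.sum_mul, Finset.mul_sum, MonoidAlgebra.single_mul_single]
    refine Fintype.sum_equiv (MulAut.conjNormal g).toEquiv _ _ fun n => ?_
    simp [hx, mul_comm]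
  rw [Subring.mem_center_iff]
  intro u
  induction u using MonoidAlgebra.induction_linear with
  | zero => simp
  | add a b ha hb => rw [add_mul, mul_add, ha, hb]
  | single g r => exact h1 g r

theorem center_coeff {G : Type*} [Group G] {u : MonoidAlgebra ℤ G}
    (hu : u ∈ Subring.center (MonoidAlgebra ℤ G)) (g h : G) :
    u.coeff (g * h * g⁻¹) = u.coeff h := by
  have := Subring.mem_center_iff.1 hu (MonoidAlgebra.single g 1)
  have := congrArg (fun z => z.coeff (g * h)) this
  simpa [MonoidAlgebra.coeff_mul_single_apply, MonoidAlgebra.coeff_single_mul_apply] using this.symm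

theorem trace_sum_pow {E : Type*} [AddCommGroup E] [Module ℝ E] [FiniteDimensional ℝ E]
    (T : Module.End ℝ E) (n : ℕ) (hn : 0 < n) (hT : T ^ n = 1) :
    ∃ r : ℚ, LinearMap.trace ℝ E (∑ j ∈ Finset.range n, T ^ j) = r := by
  set S := ∑ j ∈ Finset.range n, T ^ j with hS
  have h1 : T * S = S := by
    have := mul_geom_sum T n
    rw [hT, sub_self, sub_mul, one_mul, sub_eq_zero] at this
    exact this
  have h2 : ∀ j : ℕ, T ^ j * S = S := by
    intro j
    induction j with
    | zero => simp
    | succ j ih => rw [pow_succ, mul_assoc, h1, ih]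
  have h3 : S * S = (n : ℝ) • S := by
    nth_rewrite 1 [hS]
    rw [Finset.sum_mul, Finset.sum_congr rfl (fun j _ => h2 j), Finset.sum_const,
      Finset.card_range, Nat.cast_smul_eq_nsmul]
  have hn' : (n : ℝ) ≠ 0 := by positivity
  have h4 : IsIdempotentElem ((n : ℝ)⁻¹ • S) := by
    rw [IsIdempotentElem, smul_mul_smul_comm, h3, smul_smul]
    congr 1
    field_simp
  have h5 := (LinearMap.IsIdempotentElem.isProj_range _ h4).trace
  rw [map_smul, smul_eq_mul] at h5
  refine ⟨n * (Module.finrank ℝ (LinearMap.range ((n : ℝ)⁻¹ • S)) : ℕ), ?_⟩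
  push_cast
  rw [← h5]
  field_simp

theorem trace_sum_pow_coprime {p : ℕ} (hp : p.Prime) {E : Type*} [AddCommGroup E] [Module ℝ E]
    [FiniteDimensional ℝ E] (T : Module.End ℝ E) (k : ℕ) (hT : T ^ p ^ (k + 1) = 1) :
    ∃ r : ℚ, LinearMap.trace ℝ E (∑ j ∈ (Finset.range (p ^ (k + 1))).filter (fun j => ¬ p ∣ j), T ^ j) = r := by
  have hpos := hp.pos
  obtain ⟨r1, h1⟩ := trace_sum_pow T (p ^ (k + 1)) (by positivity) hT
  obtain ⟨r2, h2⟩ := trace_sum_pow (T ^ p) (p ^ k) (by positivity)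
    (by rw [← pow_mul, ← pow_succ', hT])
  refine ⟨r1 - r2, ?_⟩
  have h3 := Finset.sum_filter_add_sum_filter_not (Finset.range (p ^ (k + 1))) (fun j => p ∣ j)
    (fun j => T ^ j)
  have h4 : ∑ j ∈ (Finset.range (p ^ (k + 1))).filter (fun j => p ∣ j), T ^ j
      = ∑ i ∈ Finset.range (p ^ k), (T ^ p) ^ i := by
    symm
    refine Finset.sum_bij (fun i _ => p * i) ?_ ?_ ?_ ?_
    · intro i hi
      simp only [Finset.mem_filter, Finset.mem_range] at hi ⊢
      refine ⟨?_, dvd_mul_right _ _⟩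
      rw [pow_succ']
      exact Nat.mul_lt_mul_of_pos_left hi hpos
    · intro i _ j _ h
      exact Nat.eq_of_mul_eq_mul_left hpos h
    · intro j hj
      simp only [Finset.mem_filter, Finset.mem_range] at hj
      obtain ⟨h5, i, rfl⟩ := hj
      refine ⟨i, ?_, rfl⟩
      rw [pow_succ'] at h5
      rw [Finset.mem_range]
      exact Nat.lt_of_mul_lt_mul_left h5
    · intro i _
      rw [pow_mul]
  rw [h4] at h3
  rw [← eq_sub_iff_add_eq'] at h3
  rw [h3, map_sub, h1, h2]
  push_cast; rfl

theorem rational_scalar {p : ℕ} (hp : p.Prime) {N : Type*} [Group N] [Fintype N]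
    (hN : IsPGroup p N) {E : Type*} [AddCommGroup E] [Module ℝ E]
    [FiniteDimensional ℝ E] [Nontrivial E] (ρ : N →* Module.End ℝ E) (v : N → ℤ)
    (hv : ∀ (g : N) (j : ℕ), ¬ p ∣ j → v (g ^ j) = v g) (c : ℝ)
    (h : ∑ g, (v g : ℝ) • ρ g = c • 1) : ∃ r : ℚ, c = r := by
  have := Fact.mk hp
  obtain ⟨k, hk⟩ := IsPGroup.iff_card.1 hN
  have hexp : ∀ g : N, g ^ p ^ (k + 1) = 1 := by
    intro g
    rw [pow_succ, pow_mul, ← hk, pow_card_eq_one', one_pow]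
  let t : N → ℝ := fun g => LinearMap.trace ℝ E (ρ g)
  have h1 : ∑ g, (v g : ℝ) * t g = c * Module.finrank ℝ E := by
    have := congrArg (LinearMap.trace ℝ E) h
    simpa [map_sum, t] using this
  set J := (Finset.range (p ^ (k + 1))).filter (fun j => ¬ p ∣ j) with hJ
  have h2 : ∀ j ∈ J, ∑ g, (v g : ℝ) * t (g ^ j) = c * Module.finrank ℝ E := by
    intro j hj
    have hj' : ¬ p ∣ j := (Finset.mem_filter.1 hj).2
    rw [← h1]
    have hb : Function.Bijective (fun g : N => g ^ j) := by
      apply Nat.Coprime.pow_left_bijective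
      rw [hk]
      exact Nat.Coprime.pow_left _ ((Nat.Prime.coprime_iff_not_dvd hp).2 hj')
    refine Fintype.sum_equiv (Equiv.ofBijective _ hb) _ _ fun g => ?_
    simp [hv g j hj']
  have h3 : (J.card : ℝ) * (c * Module.finrank ℝ E) = ∑ g, (v g : ℝ) * ∑ j ∈ J, t (g ^ j) := by
    simp only [Finset.mul_sum]
    rw [Finset.sum_comm, Finset.sum_congr rfl h2, Finset.sum_const, nsmul_eq_mul]
  have h4 : ∀ g, ∃ r : ℚ, ∑ j ∈ J, t (g ^ j) = r := by
    intro g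
    obtain ⟨r, hr⟩ := trace_sum_pow_coprime hp (ρ g) k (by rw [← map_pow, hexp, map_one])
    refine ⟨r, ?_⟩
    rw [← hr, map_sum]
    simp [t, hJ]
  choose r hr using h4
  have hJ0 : (J.card : ℝ) ≠ 0 := by
    have : 1 ∈ J := by
      rw [hJ, Finset.mem_filter, Finset.mem_range]
      refine ⟨Nat.one_lt_pow (by omega) hp.one_lt, ?_⟩
      intro h; exact hp.one_lt.ne' (Nat.dvd_one.1 h)
    have := Finset.card_pos.2 ⟨1, this⟩
    positivity
  have hd : (Module.finrank ℝ E : ℝ) ≠ 0 := by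
    have := Module.finrank_pos (R := ℝ) (M := E)
    positivity
  refine ⟨(∑ g, (v g : ℚ) * r g) / (J.card * Module.finrank ℝ E), ?_⟩
  push_cast
  rw [eq_div_iff (by positivity)]
  simp only [← hr]
  rw [← h3]; ring

theorem eig_rational {p : ℕ} (hp : p.Prime) {N : Type*} [Group N] [Fintype N] [DecidableEq N]
    (hN : IsPGroup p N) (v : N → ℤ) (hcl : ∀ a b, v (a * b) = v (b * a))
    (hv : ∀ (g : N) (j : ℕ), ¬ p ∣ j → v (g ^ j) = v g) (c : ℝ) (f : N → ℝ) (hf : f ≠ 0)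
    (h : (gmat (fun n => (v n : ℝ))).mulVec f = c • f) : ∃ r : ℚ, c = r := by
  let A : Module.End ℝ (N → ℝ) := Matrix.toLin' (gmat (fun n => (v n : ℝ)))
  let P : N →* Module.End ℝ (N → ℝ) :=
    { toFun := fun n => LinearMap.funLeft ℝ ℝ (fun g => n⁻¹ * g)
      map_one' := by ext; simp [LinearMap.funLeft]
      map_mul' := fun a b => by ext; simp [LinearMap.funLeft, mul_assoc] }
  have hA : A = ∑ n, (v n : ℝ) • P n := by
    apply LinearMap.ext
    intro f
    ext g
    simp only [A, P, Matrix.toLin'_apply, Matrix.mulVec, dotProduct, gmat_apply,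
      LinearMap.sum_apply, Finset.sum_apply, LinearMap.smul_apply, Pi.smul_apply, smul_eq_mul,
      MonoidHom.coe_mk, OneHom.coe_mk, LinearMap.funLeft_apply]
    refine Fintype.sum_equiv ((Equiv.inv N).trans (Equiv.mulLeft g)) _ _ fun k => ?_
    simp
  have hcomm : ∀ n, P n * A = A * P n := by
    intro n
    rw [hA, Finset.mul_sum, Finset.sum_mul]
    simp only [mul_smul_comm, smul_mul_assoc, ← map_mul]
    refine Fintype.sum_equiv (MulAut.conj n).toEquiv _ _ fun k => ?_
    simp [hcl (n * k) n⁻¹]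
  let E := Module.End.eigenspace A c
  have hmap : ∀ n, ∀ x ∈ E, P n x ∈ E := by
    intro n x hx
    rw [Module.End.mem_eigenspace_iff] at hx ⊢
    have := congrArg (fun T => T x) (hcomm n)
    simp only [Module.End.mul_apply] at this
    rw [← this, hx, map_smul]
  let ρ : N →* Module.End ℝ E :=
    { toFun := fun n => (P n).restrict (hmap n)
      map_one' := by ext x; simp
      map_mul' := fun a b => by ext x; simp }
  have hfE : f ∈ E := by rw [Module.End.mem_eigenspace_iff]; exact h
  have : Nontrivial E := ⟨⟨f, hfE⟩, 0, fun h => hf (congrArg Subtype.val h)⟩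
  refine rational_scalar hp hN ρ v hv c ?_
  apply LinearMap.ext
  intro x
  apply Subtype.ext
  have hx := Module.End.mem_eigenspace_iff.1 x.2
  rw [hA] at hx
  simpa [ρ] using hx

theorem sq_sum_le {p : ℕ} (hp : p.Prime) {N : Type*} [Group N] [Fintype N] [DecidableEq N]
    (hN : IsPGroup p N) (x y v : N → ℤ) (hxy : gmat x * gmat y = 1)
    (hxv : gmat x * (gmat x).transpose = gmat v) (hcl : ∀ a b, v (a * b) = v (b * a))
    (hv : ∀ (g : N) (j : ℕ), ¬ p ∣ j → v (g ^ j) = v g) : ∑ n, x n ^ 2 ≤ 1 := by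
  let V : Matrix N N ℤ := gmat v
  let A : Matrix N N ℝ := V.map (Int.castRingHom ℝ)
  have hAe : A = gmat (fun n => (v n : ℝ)) := rfl
  have hA : A.IsHermitian := by
    have : V.transpose = V := by
      show (gmat v).transpose = gmat v
      rw [← hxv, Matrix.transpose_mul, Matrix.transpose_transpose]
    rw [Matrix.IsHermitian, Matrix.conjTranspose_eq_transpose_of_trivial]
    show (V.map (Int.castRingHom ℝ)).transpose = _
    rw [← Matrix.transpose_map, this]
  have hdet : IsUnit V.det := by
    show IsUnit (gmat v).det
    rw [← hxv, Matrix.det_mul, Matrix.det_transpose]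
    have : IsUnit (gmat x).det := by
      have := congrArg Matrix.det hxy
      rw [Matrix.det_mul, Matrix.det_one] at this
      exact IsUnit.of_mul_eq_one _ this
    exact this.mul this
  have heig : ∀ i, hA.eigenvalues i ≤ 1 := by
    intro i
    have h1 := hA.mulVec_eigenvectorBasis i
    have hne : (⇑(hA.eigenvectorBasis i) : N → ℝ) ≠ 0 := by
      intro h
      have := (hA.eigenvectorBasis.toBasis.ne_zero i)
      apply this
      ext j
      simpa using congrFun h j
    obtain ⟨r, hr⟩ := eig_rational hp hN v hcl hv _ _ hne (by rw [← hAe]; exact h1)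
    have hroot : Polynomial.eval₂ (Int.castRingHom ℝ) (hA.eigenvalues i) V.charpoly = 0 := by
      rw [← Polynomial.eval_map, ← Matrix.charpoly_map]
      show A.charpoly.eval _ = 0
      rw [hA.charpoly_eq, Polynomial.eval_prod]
      exact Finset.prod_eq_zero (Finset.mem_univ i) (by simp)
    have hintegral : IsIntegral ℤ r := by
      refine ⟨V.charpoly, V.charpoly_monic, ?_⟩
      rw [hr] at hroot
      have : (r : ℝ) = algebraMap ℚ ℝ r := rfl
      rw [this, show Int.castRingHom ℝ = (algebraMap ℚ ℝ).comp (Int.castRingHom ℚ) from RingHom.ext_int _ _,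
        ← Polynomial.hom_eval₂] at hroot
      exact (map_eq_zero _).1 hroot
    obtain ⟨m, hm⟩ := IsIntegrallyClosed.isIntegral_iff.1 hintegral
    have hr' : hA.eigenvalues i = (m : ℝ) := by rw [hr, ← hm]; simp
    have hroot2 : V.charpoly.eval m = 0 := by
      rw [hr'] at hroot
      have : ((V.charpoly.eval m : ℤ) : ℝ) = 0 := by
        rw [← hroot]
        exact (Polynomial.eval₂_at_apply (Int.castRingHom ℝ) m).symm
      exact_mod_cast this
    have hdvd : m ∣ V.det := by
      have h5 : m ∣ V.charpoly.coeff 0 := by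
        have := Polynomial.sub_dvd_eval_sub m 0 V.charpoly
        rw [hroot2, zero_sub, sub_zero, dvd_neg] at this
        rwa [Polynomial.coeff_zero_eq_eval_zero]
      rw [Matrix.det_eq_sign_charpoly_coeff]
      exact Dvd.dvd.mul_left h5 _
    have hu : IsUnit m := isUnit_of_dvd_unit hdvd hdet
    rw [hr']
    rcases Int.isUnit_iff.1 hu with h | h <;> rw [h] <;> norm_num
  have htr : A.trace = (Fintype.card N : ℝ) * v 1 := by
    rw [hAe]
    simp [Matrix.trace, gmat_apply]
  have hle : A.trace ≤ Fintype.card N := by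
    rw [hA.trace_eq_sum_eigenvalues]
    calc _ ≤ ∑ i : N, (1 : ℝ) := Finset.sum_le_sum fun i _ => by simpa using heig i
      _ = _ := by simp
  have hv1 : v 1 = ∑ n, x n ^ 2 := by
    have := congrFun (congrFun hxv 1) 1
    rw [gmat_apply, Matrix.mul_apply] at this
    simp only [mul_inv_cancel, Matrix.transpose_apply, gmat_apply, one_mul] at this
    rw [← this]
    refine Fintype.sum_equiv (Equiv.inv N) _ _ fun k => ?_
    simp [sq]
  rw [htr] at hle
  have hc : (0:ℝ) < Fintype.card N := by exact_mod_cast Fintype.card_pos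
  have : (v 1 : ℝ) ≤ 1 := by
    by_contra hh
    push Not at hh
    nlinarith
  rw [← hv1]
  exact_mod_cast this

theorem cut_closure_normal {G : Type*} [Group G] (S : Set G)
    (hc : ∀ g : G, ∀ s ∈ S, g * s * g⁻¹ ∈ S) : (Subgroup.closure S).Normal := by
  refine ⟨fun n hn g => ?_⟩
  have : Subgroup.closure S ≤ (Subgroup.closure S).comap (MulAut.conj g).toMonoidHom := by
    refine (Subgroup.closure_le _).2 fun s hs => ?_
    simpa using Subgroup.subset_closure (hc g s hs)
  simpa using this hn

theorem gmat_transpose {N : Type*} [Group N] {R : Type*} (x : N → R) :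
    (gmat x).transpose = gmat (fun n => x n⁻¹) := by
  ext g h
  simp [gmat_apply]

theorem mem_FCTorsion_of_normal {G : Type*} [Group G] (hT : ∀ g : G, IsOfFinOrder g)
    (N : Subgroup G) [N.Normal] [Finite N] (n : N) : (n : G) ∈ FCTorsion G := by
  refine ⟨(Set.toFinite (N : Set G)).subset ?_, hT _⟩
  intro h hh
  obtain ⟨g, rfl⟩ := isConj_iff.1 hh
  exact Subgroup.Normal.conj_mem inferInstance _ n.2 g

theorem cut_of_powConj {p : ℕ} (hp : p.Prime) {G : Type*} [Group G] (hG : IsPGroup p G)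
    (H : ∀ j : ℤ, ¬ (p : ℤ) ∣ j → PowConj G j) : IsCutGroup G := by
  classical
  intro u hu
  have hT : ∀ g : G, IsOfFinOrder g := by
    intro g
    obtain ⟨k, hk⟩ := isPGroup_iff_pow_pow_eq_one.1 hG g
    exact isOfFinOrder_iff_pow_eq_one.2 ⟨p ^ k, pow_pos hp.pos _, hk⟩
  have hu' : (↑u⁻¹ : MonoidAlgebra ℤ G) ∈ Subring.center (MonoidAlgebra ℤ G) := by
    rw [Subring.mem_center_iff] at hu ⊢
    intro w
    exact (Commute.units_inv_right (u := u) (hu w)).eq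
  set u' := (↑u⁻¹ : MonoidAlgebra ℤ G) with hu'd
  let S : Set G := {g | (u : MonoidAlgebra ℤ G).coeff g ≠ 0} ∪ {g | u'.coeff g ≠ 0}
  have hS : S.Finite := by
    refine Set.Finite.union ?_ ?_
    · exact ((u : MonoidAlgebra ℤ G).coeff.support.finite_toSet).subset (by intro g hg; simpa using hg)
    · exact (u'.coeff.support.finite_toSet).subset (by intro g hg; simpa using hg)
  have hc : ∀ g : G, ∀ s ∈ S, g * s * g⁻¹ ∈ S := by
    rintro g s (hs | hs)
    · left; rw [Set.mem_setOf_eq, center_coeff hu]; exact hs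
    · right; rw [Set.mem_setOf_eq, center_coeff hu']; exact hs
  have hfin := cut_finite_closure hT S hS hc
  have hnor := cut_closure_normal S hc
  set N := Subgroup.closure S with hN
  have : Fintype N := Fintype.ofFinite N
  let x : N → ℤ := fun n => (u : MonoidAlgebra ℤ G).coeff (n : G)
  let y : N → ℤ := fun n => u'.coeff (n : G)
  have hx : (u : MonoidAlgebra ℤ G) = toG N x :=
    eq_toG N _ fun g hg => Subgroup.subset_closure (Or.inl hg)
  have hy : u' = toG N y :=
    eq_toG N _ fun g hg => Subgroup.subset_closure (Or.inr hg)
  have hxy : gmat x * gmat y = 1 := by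
    rw [← gmat_one]
    apply gmat_of_toG_mul N
    rw [← hx, ← hy, toG_one]
    exact u.mul_inv
  have hxc : ∀ (g : G) (n : N), x (MulAut.conjNormal g n) = x n := by
    intro g n
    simp only [x, MulAut.conjNormal_apply]
    exact center_coeff hu g n
  let v : N → ℤ := fun n => ∑ k, x (n * k⁻¹) * x k⁻¹
  have hxv : gmat x * (gmat x).transpose = gmat v := by
    rw [gmat_transpose, gmat_mul]
  have hvc : ∀ (g : G) (n : N), v (MulAut.conjNormal g n) = v n := by
    intro g n
    symm
    refine Fintype.sum_equiv (MulAut.conjNormal g).toEquiv _ _ fun k => ?_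
    rw [← hxc g (n * k⁻¹), ← hxc g k⁻¹]
    simp
  have hvi : ∀ n, v n⁻¹ = v n := by
    have : (gmat v).transpose = gmat v := by
      rw [← hxv, Matrix.transpose_mul, Matrix.transpose_transpose]
    rw [gmat_transpose] at this
    exact fun n => congrFun (gmat_injective this) n
  have hconj : ∀ a b : N, IsConj (a : G) (b : G) → v a = v b := by
    intro a b h
    obtain ⟨g, hg⟩ := isConj_iff.1 h
    rw [← hvc g a]
    congr 1
    exact Subtype.ext (by simpa using hg)
  have hle := sq_sum_le hp (hG.to_subgroup N) x y v hxy hxv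
    (by
      intro a b
      apply hconj
      exact isConj_iff.2 ⟨b, by simp [mul_assoc]⟩)
    (by
      intro g j hj
      have := H j (by exact_mod_cast hj) g (mem_FCTorsion_of_normal hT N g)
      rcases this with h | h
      · exact hconj _ _ (by simpa using h)
      · rw [← hvi g]
        exact hconj _ _ (by simpa using h))
  have hx0 : ∃ n0, x n0 ≠ 0 := by
    by_contra hh
    push Not at hh
    have : (u : MonoidAlgebra ℤ G) = 0 := by
      rw [hx, toG]; simp [hh]
    exact u.ne_zero this
  obtain ⟨n0, hn0⟩ := hx0
  have h1 : ∀ n, n ≠ n0 → x n = 0 := by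
    intro n hn
    by_contra h
    have h2 : ∑ m ∈ ({n, n0} : Finset N), x m ^ 2 ≤ ∑ m, x m ^ 2 :=
      Finset.sum_le_sum_of_subset_of_nonneg (Finset.subset_univ _) fun _ _ _ => sq_nonneg _
    rw [Finset.sum_pair hn] at h2
    have h3 : 0 < x n ^ 2 := by positivity
    have h4 : 0 < x n0 ^ 2 := by positivity
    omega
  have h2 : x n0 = 1 ∨ x n0 = -1 := by
    have h2 : x n0 ^ 2 ≤ ∑ m, x m ^ 2 :=
      Finset.single_le_sum (f := fun m => x m ^ 2) (fun _ _ => sq_nonneg _) (Finset.mem_univ n0)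
    have h4 : 0 < x n0 ^ 2 := by positivity
    have h5 : x n0 ^ 2 = 1 := by omega
    rcases mul_eq_zero.1 (by linear_combination h5 : (x n0 - 1) * (x n0 + 1) = 0) with h | h
    · left; omega
    · right; omega
  refine ⟨n0, ?_⟩
  have h3 : (u : MonoidAlgebra ℤ G) = MonoidAlgebra.single (n0 : G) (x n0) := by
    rw [hx, toG]
    refine Finset.sum_eq_single n0 ?_ (by simp)
    intro b _ hb
    rw [h1 b hb]; simp
  rcases h2 with h | h
  · left; rw [h3, h]; rfl
  · right; rw [h3, h]
    ext; simp

open Polynomial in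
theorem cut_exists_unit (K : Type*) [Field K] [NumberField K] [NumberField.IsTotallyReal K]
    (h : 2 ≤ Module.finrank ℚ K) :
    ∃ ε : (NumberField.RingOfIntegers K)ˣ, ∀ r : ℕ, 0 < r → ε ^ r ≠ 1 := by
  have h1 : 0 < NumberField.Units.rank K := by
    have h2 := NumberField.IsTotallyReal.finrank (K := K)
    have h3 := NumberField.InfinitePlace.card_eq_nrRealPlaces_add_nrComplexPlaces (K := K)
    rw [NumberField.Units.rank]
    omega
  by_contra! hc
  have h2 : ∀ x : Additive (NumberField.RingOfIntegers K)ˣ, ∃ n : ℤ, n ≠ 0 ∧ n • x = 0 := by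
    intro x
    obtain ⟨r, hr, h⟩ := hc (Additive.toMul x)
    refine ⟨r, by omega, ?_⟩
    rw [natCast_zsmul]
    exact h
  have h3 := NumberField.Units.finrank_eq K
  rw [Module.finrank_eq_zero_iff.2 h2] at h3
  omega

theorem cut_denominator {K : Type*} [Field K] [NumberField K] {N : Type*} [Fintype N]
    (L : K →ₗ[ℚ] Matrix N N ℚ) : ∃ D : ℕ, 0 < D ∧ ∀ κ : NumberField.RingOfIntegers K,
      ∃ M : Matrix N N ℤ, M.map (Int.cast : ℤ → ℚ) = (D : ℚ) • L (κ : K) := by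
  let b := NumberField.RingOfIntegers.basis K
  obtain ⟨d, hd⟩ := IsLocalization.exist_integer_multiples_of_finite (nonZeroDivisors ℤ)
    (fun i : (Module.Free.ChooseBasisIndex ℤ (NumberField.RingOfIntegers K)) × N × N =>
      L (b i.1 : K) i.2.1 i.2.2)
  have hd0 : (d : ℤ) ≠ 0 := nonZeroDivisors.ne_zero d.2
  choose c hc using hd
  refine ⟨(d : ℤ).natAbs, by omega, ?_⟩
  have key : ∀ κ : NumberField.RingOfIntegers K,
      ∃ M : Matrix N N ℤ, M.map (Int.cast : ℤ → ℚ) = ((d : ℤ) : ℚ) • L (κ : K) := by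
    intro κ
    have : κ ∈ Submodule.span ℤ (Set.range b) := by rw [b.span_eq]; trivial
    induction this using Submodule.span_induction with
    | mem x hx =>
      obtain ⟨i, rfl⟩ := hx
      refine ⟨Matrix.of fun g h => c (i, g, h), ?_⟩
      ext g h
      have := hc (i, g, h)
      simpa [Submonoid.smul_def] using this
    | zero => exact ⟨0, by ext; simp⟩
    | add x y _ _ hx hy =>
      obtain ⟨M, hM⟩ := hx
      obtain ⟨M', hM'⟩ := hy
      refine ⟨M + M', ?_⟩
      rw [Matrix.map_add _ (by simp), hM, hM']
      simp
    | smul a x _ hx =>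
      obtain ⟨M, hM⟩ := hx
      refine ⟨a • M, ?_⟩
      have h1 : ((a • x : NumberField.RingOfIntegers K) : K) = (a : ℚ) • (x : K) := by
        simp [Algebra.smul_def]
      rw [h1, map_smul, smul_comm, ← hM]
      ext; simp
  intro κ
  obtain ⟨M, hM⟩ := key κ
  rcases Int.natAbs_eq (d : ℤ) with h | h
  · refine ⟨M, ?_⟩
    rw [hM]; congr 1; rw [h]; simp
  · refine ⟨-M, ?_⟩
    have : (-M).map (Int.cast : ℤ → ℚ) = -(M.map (Int.cast : ℤ → ℚ)) := by ext; simp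
    rw [this, hM, ← neg_smul]; congr 1; rw [h]; simp

theorem cut_unit_mod {K : Type*} [Field K] [NumberField K] (D : ℕ) (hD : 0 < D)
    (ε : (NumberField.RingOfIntegers K)ˣ) : ∃ t : ℕ, 0 < t ∧
      ∃ κ κ' : NumberField.RingOfIntegers K, ((ε ^ t : (NumberField.RingOfIntegers K)ˣ) :
        NumberField.RingOfIntegers K) = 1 + D * κ ∧
        (((ε ^ t)⁻¹ : (NumberField.RingOfIntegers K)ˣ) : NumberField.RingOfIntegers K) = 1 + D * κ' := by
  let I : Ideal (NumberField.RingOfIntegers K) := Ideal.span {(D : NumberField.RingOfIntegers K)}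
  have hI : I ≠ ⊥ := by
    rw [Ne, Ideal.span_singleton_eq_bot]
    exact_mod_cast hD.ne'
  have : Finite (NumberField.RingOfIntegers K ⧸ I) := Ideal.finiteQuotientOfFreeOfNeBot I hI
  let e := Units.map (Ideal.Quotient.mk I).toMonoidHom ε
  have he : IsOfFinOrder e := isOfFinOrder_of_finite e
  have key : ∀ u : (NumberField.RingOfIntegers K)ˣ,
      Units.map (Ideal.Quotient.mk I).toMonoidHom u = 1 →
      ∃ κ : NumberField.RingOfIntegers K, (u : NumberField.RingOfIntegers K) = 1 + D * κ := by
    intro u hu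
    have h1 : Ideal.Quotient.mk I u = Ideal.Quotient.mk I 1 := by
      have := congrArg Units.val hu
      simpa using this
    rw [Ideal.Quotient.eq, Ideal.mem_span_singleton] at h1
    obtain ⟨κ, hκ⟩ := h1
    exact ⟨κ, by linear_combination hκ⟩
  have h1 : Units.map (Ideal.Quotient.mk I).toMonoidHom (ε ^ orderOf e) = 1 := by
    rw [map_pow]; exact pow_orderOf_eq_one e
  obtain ⟨κ, hκ⟩ := key _ h1
  obtain ⟨κ', hκ'⟩ := key (ε ^ orderOf e)⁻¹ (by rw [map_inv, h1, inv_one])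
  exact ⟨orderOf e, he.orderOf_pos, κ, κ', hκ, hκ'⟩

open Polynomial in
theorem cut_aeval_transpose {N : Type*} [Fintype N] [DecidableEq N] (Z : Matrix N N ℚ)
    (hZ : Z.transpose = Z) (P : ℚ[X]) : (aeval Z P).transpose = aeval Z P := by
  induction P using Polynomial.induction_on' with
  | add p q hp hq => simp [hp, hq]
  | monomial n a => simp [aeval_monomial, Matrix.transpose_pow, hZ, Algebra.algebraMap_eq_smul_one]

open Polynomial in
theorem cut_minpoly_squarefree {N : Type*} [Fintype N] [DecidableEq N] (Z : Matrix N N ℚ)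
    (hZ : Z.transpose = Z) : Squarefree (minpoly ℚ Z) := by
  intro x hx
  obtain ⟨c, hc⟩ := hx
  have h0 : minpoly ℚ Z ≠ 0 := minpoly.ne_zero (Matrix.isIntegral Z)
  have h1 : aeval Z (x * c) * aeval Z (x * c) = 0 := by
    rw [← map_mul, show x * c * (x * c) = minpoly ℚ Z * c by rw [hc]; ring, map_mul, minpoly.aeval,
      zero_mul]
  have h2 : aeval Z (x * c) = 0 := by
    rw [← Matrix.self_mul_conjTranspose_eq_zero, Matrix.conjTranspose_eq_transpose_of_trivial,
      cut_aeval_transpose Z hZ, h1]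
  have h3 := minpoly.dvd ℚ Z h2
  obtain ⟨d, hd⟩ := h3
  have hxc : x * c ≠ 0 := by
    intro h
    apply h0
    rw [hc, mul_assoc, h, mul_zero]
  refine IsUnit.of_mul_eq_one d ?_
  apply mul_left_cancel₀ hxc
  rw [mul_one]
  conv_rhs => rw [hd, hc]
  ring

open Polynomial in
theorem cut_root_real {N : Type*} [Fintype N] [DecidableEq N] (Z : Matrix N N ℚ)
    (hZ : Z.transpose = Z) (w : ℂ) (hw : aeval w (minpoly ℚ Z) = 0) : star w = w := by
  have h1 : aeval w Z.charpoly = 0 := by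
    obtain ⟨c, hc⟩ := Matrix.minpoly_dvd_charpoly Z
    rw [hc, map_mul, hw, zero_mul]
  have hH : (Z.map (algebraMap ℚ ℂ)).IsHermitian := by
    ext i j
    have : Z j i = Z i j := congrFun (congrFun hZ i) j
    simp [Matrix.conjTranspose_apply, this]
  rw [aeval_def, ← eval_map, ← Matrix.charpoly_map, hH.charpoly_eq, eval_prod,
    Finset.prod_eq_zero_iff] at h1
  obtain ⟨i, -, hi⟩ := h1
  have : w = (hH.eigenvalues i : ℂ) := by
    simpa [sub_eq_zero] using hi
  rw [this]
  simp

open Polynomial in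
theorem cut_totallyReal {N : Type*} [Fintype N] [DecidableEq N] (Z : Matrix N N ℚ)
    (hZ : Z.transpose = Z) (f : ℚ[X]) [Fact (Irreducible f)] (hf : f ∣ minpoly ℚ Z) :
    NumberField.IsTotallyReal (AdjoinRoot f) := by
  refine ⟨fun v => ?_⟩
  rw [NumberField.InfinitePlace.isReal_iff]
  set φ := v.embedding
  have h1 : star (φ (AdjoinRoot.root f)) = φ (AdjoinRoot.root f) := by
    apply cut_root_real Z hZ
    obtain ⟨c, hc⟩ := hf
    have h2 : eval₂ (AdjoinRoot.of f) (AdjoinRoot.root f) (minpoly ℚ Z) = 0 := by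
      rw [hc, eval₂_mul, AdjoinRoot.eval₂_root, zero_mul]
    have h3 := congrArg φ h2
    rw [hom_eval₂, map_zero] at h3
    rw [aeval_def, ← h3]
    congr 1
    exact Subsingleton.elim _ _
  rw [NumberField.ComplexEmbedding.isReal_iff]
  refine AdjoinRoot.ringHom_ext (Subsingleton.elim _ _) ?_
  exact h1

open Polynomial in
theorem cut_units_matrix {N : Type*} [Fintype N] [DecidableEq N] (Z : Matrix N N ℚ)
    (hZ : Z.transpose = Z) (f : ℚ[X]) (hirr : Irreducible f) (hm : f.Monic)
    (hf : f ∣ minpoly ℚ Z) (hdeg : 2 ≤ f.natDegree) :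
    ∃ (X X' : Matrix N N ℤ) (P P' : ℚ[X]), X.map (Int.cast : ℤ → ℚ) = aeval Z P ∧
      X'.map (Int.cast : ℤ → ℚ) = aeval Z P' ∧ X * X' = 1 ∧ X' * X = 1 ∧
      ∀ r : ℕ, 0 < r → X ^ r ≠ 1 := by
  have : Fact (Irreducible f) := ⟨hirr⟩
  have := cut_totallyReal Z hZ f hf
  obtain ⟨f2, hf2⟩ := hf
  have hcop : IsCoprime f f2 := by
    have := cut_minpoly_squarefree Z hZ
    rw [hf2] at this
    exact (squarefree_mul_iff.1 this).1.isCoprime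
  obtain ⟨s', s, hs⟩ := hcop
  have : FiniteDimensional ℚ (AdjoinRoot f) := (AdjoinRoot.powerBasis' hm).finite
  have : NumberField (AdjoinRoot f) := { }
  have hfr : 2 ≤ Module.finrank ℚ (AdjoinRoot f) := by
    rw [(AdjoinRoot.powerBasis' hm).finrank]
    simpa using hdeg
  obtain ⟨ε, hε⟩ := cut_exists_unit (AdjoinRoot f) hfr
  let Q : AdjoinRoot f →ₗ[ℚ] ℚ[X] :=
    (LinearMap.mulRight ℚ (s * f2)) ∘ₗ (AdjoinRoot.modByMonicHom hm)
  have hQ : ∀ κ, Q κ = AdjoinRoot.modByMonicHom hm κ * (s * f2) := fun κ => rfl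
  have hQ1 : ∀ κ, AdjoinRoot.mk f (Q κ) = κ := by
    intro κ
    have h1 : AdjoinRoot.mk f (s * f2) = 1 := by
      rw [← map_one (AdjoinRoot.mk f), ← hs, map_add, map_mul _ s' f, AdjoinRoot.mk_self]
      simp
    rw [hQ, map_mul, h1, mul_one]
    exact AdjoinRoot.mk_leftInverse hm κ
  have hQ2 : ∀ κ, f2 ∣ Q κ := fun κ => ⟨AdjoinRoot.modByMonicHom hm κ * s, by rw [hQ]; ring⟩
  obtain ⟨D, hD, hL⟩ := cut_denominator ((aeval Z).toLinearMap ∘ₗ Q)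
  obtain ⟨t, ht, κ, κ', hκ, hκ'⟩ := cut_unit_mod D hD ε
  obtain ⟨M, hM⟩ := hL κ
  obtain ⟨M', hM'⟩ := hL κ'
  have e1 : ((1 + M).map (Int.cast : ℤ → ℚ)) = aeval Z (1 + (D : ℚ[X]) * Q κ) := by
    rw [Matrix.map_add _ (by simp), hM]
    simp [Algebra.smul_def]
  have e2 : ((1 + M').map (Int.cast : ℤ → ℚ)) = aeval Z (1 + (D : ℚ[X]) * Q κ') := by
    rw [Matrix.map_add _ (by simp), hM']
    simp [Algebra.smul_def]
  have hinj : Function.Injective (fun A : Matrix N N ℤ => A.map (Int.cast : ℤ → ℚ)) :=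
    Matrix.map_injective Int.cast_injective
  have u1 : AdjoinRoot.mk f (1 + (D : ℚ[X]) * Q κ) = (((ε ^ t :
      (NumberField.RingOfIntegers (AdjoinRoot f))ˣ) : NumberField.RingOfIntegers (AdjoinRoot f)) :
        AdjoinRoot f) := by
    rw [hκ, map_add, map_mul, hQ1]; simp
  have u2 : AdjoinRoot.mk f (1 + (D : ℚ[X]) * Q κ') = ((((ε ^ t)⁻¹ :
      (NumberField.RingOfIntegers (AdjoinRoot f))ˣ) : NumberField.RingOfIntegers (AdjoinRoot f)) :
        AdjoinRoot f) := by
    rw [hκ', map_add, map_mul, hQ1]; simp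
  have hmul : (1 + M) * (1 + M') = 1 := by
    apply hinj
    change ((1 + M) * (1 + M')).map (Int.castRingHom ℚ) = (1 : Matrix N N ℤ).map (Int.castRingHom ℚ)
    rw [Matrix.map_mul]
    change ((1 + M).map (Int.cast : ℤ → ℚ)) * ((1 + M').map (Int.cast : ℤ → ℚ)) = _
    rw [e1, e2, ← map_mul, Matrix.map_one _ (by simp) (by simp), ← sub_eq_zero,
      ← map_one (aeval (R := ℚ) Z), ← map_sub]
    have hd : minpoly ℚ Z ∣ (1 + (D : ℚ[X]) * Q κ) * (1 + (D : ℚ[X]) * Q κ') - 1 := by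
      rw [hf2]
      apply IsCoprime.mul_dvd ⟨s', s, hs⟩
      · rw [← AdjoinRoot.mk_eq_zero, map_sub, map_mul, u1, u2, ← map_mul, ← Units.val_mul]
        simp
      · obtain ⟨a, ha⟩ := hQ2 κ
        obtain ⟨b, hb⟩ := hQ2 κ'
        rw [ha, hb]
        exact ⟨D * a + D * b + D * D * a * b * f2, by ring⟩
    obtain ⟨c, hc⟩ := hd
    rw [hc, map_mul, minpoly.aeval, zero_mul]
  refine ⟨1 + M, 1 + M', _, _, e1, e2, hmul, mul_eq_one_comm.1 hmul, ?_⟩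
  intro r hr hX
  apply hε (t * r) (Nat.mul_pos ht hr)
  have h1 : aeval Z ((1 + (D : ℚ[X]) * Q κ) ^ r - 1) = 0 := by
    rw [map_sub, map_pow, ← e1, map_one, sub_eq_zero]
    have := congrArg (fun A => (Int.castRingHom ℚ).mapMatrix A) hX
    simp only [map_pow, map_one] at this
    exact this
  have h2 : f ∣ (1 + (D : ℚ[X]) * Q κ) ^ r - 1 := (Dvd.intro _ hf2.symm).trans (minpoly.dvd ℚ Z h1)
  rw [← AdjoinRoot.mk_eq_zero, map_sub, map_pow, u1, map_one, sub_eq_zero] at h2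
  rw [pow_mul]
  ext
  simpa using h2

open Polynomial in
theorem cut_aeval_perm {N : Type*} [Fintype N] [DecidableEq N] (Z : Matrix N N ℚ) (σ : N ≃ N)
    (hZ : ∀ g h, Z (σ g) (σ h) = Z g h) (P : ℚ[X]) (g h : N) :
    aeval Z P (σ g) (σ h) = aeval Z P g h := by
  have h1 : Matrix.reindexAlgEquiv ℚ ℚ σ.symm Z = Z := by
    ext g h
    simp [hZ]
  have h2 := aeval_algHom_apply (Matrix.reindexAlgEquiv ℚ ℚ σ.symm).toAlgHom Z P
  have h3 : (Matrix.reindexAlgEquiv ℚ ℚ σ.symm).toAlgHom Z = Z := h1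
  rw [h3] at h2
  conv_rhs => rw [h2]
  simp

theorem gmat_pow_toG {G : Type*} [Group G] (N : Subgroup G) [Fintype N] [DecidableEq N]
    (x : N → ℤ) (r : ℕ) : ∃ w, gmat x ^ r = gmat w ∧ toG N x ^ r = toG N w := by
  induction r with
  | zero => exact ⟨Pi.single 1 1, by rw [pow_zero, gmat_one], by rw [pow_zero, toG_one]⟩
  | succ r ih =>
    obtain ⟨w, h1, h2⟩ := ih
    refine ⟨fun n => ∑ k, w (n * k⁻¹) * x k, ?_, ?_⟩
    · rw [pow_succ, h1, gmat_mul]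
    · rw [pow_succ, h2, toG_mul N _ _ _ (gmat_mul _ _)]

open Polynomial in
theorem cut_degree_le {G : Type*} [Group G] (hcut : IsCutGroup G) (hT : ∀ g : G, IsOfFinOrder g)
    (N : Subgroup G) [N.Normal] [Fintype N] [DecidableEq N] (z : N → ℤ)
    (hz : ∀ n, z n⁻¹ = z n) (hc : ∀ (g : G) (n : N), z (MulAut.conjNormal g n) = z n)
    (f : ℚ[X]) (hirr : Irreducible f) (hm : f.Monic)
    (hf : f ∣ minpoly ℚ ((gmat z).map (Int.cast : ℤ → ℚ))) : f.natDegree ≤ 1 := by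
  by_contra hdeg
  set Z : Matrix N N ℚ := (gmat z).map (Int.cast : ℤ → ℚ) with hZdef
  have hZ : Z.transpose = Z := by
    ext g h
    simp only [hZdef, Matrix.transpose_apply, Matrix.map_apply, gmat_apply]
    rw [← hz]; simp
  have hZ1 : ∀ k g h : N, Z (Equiv.mulRight k g) (Equiv.mulRight k h) = Z g h := by
    intro k g h
    simp [hZdef, gmat_apply]
  have hZ2 : ∀ (c : G) (g h : N), Z ((MulAut.conjNormal c).toEquiv g)
      ((MulAut.conjNormal c).toEquiv h) = Z g h := by
    intro c g h
    simp only [hZdef, Matrix.map_apply, gmat_apply, MulEquiv.toEquiv_eq_coe, EquivLike.coe_coe]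
    rw [← map_inv, ← map_mul, hc]
  obtain ⟨X, X', P, P', hX, hX', h1, h2, h3⟩ :=
    cut_units_matrix Z hZ f hirr hm hf (by omega)
  have key : ∀ (Y : Matrix N N ℤ) (P : ℚ[X]), Y.map (Int.cast : ℤ → ℚ) = aeval Z P →
      Y = gmat (fun n => Y n 1) ∧ ∀ (c : G) (n : N), Y (MulAut.conjNormal c n) 1 = Y n 1 := by
    intro Y P hY
    have hY' : ∀ g h, (Y g h : ℚ) = aeval Z P g h := by
      intro g h
      rw [← hY]; rfl
    constructor
    · ext g h
      rw [gmat_apply]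
      have := cut_aeval_perm Z _ (hZ1 h⁻¹) P g h
      rw [← hY', ← hY'] at this
      simpa using (Int.cast_injective this).symm
    · intro c n
      have := cut_aeval_perm Z _ (hZ2 c) P n 1
      rw [← hY', ← hY'] at this
      simpa using Int.cast_injective this
  obtain ⟨kx, cx⟩ := key X P hX
  obtain ⟨kx', cx'⟩ := key X' P' hX'
  set x : N → ℤ := fun n => X n 1
  set x' : N → ℤ := fun n => X' n 1
  rw [kx, kx', ← gmat_one] at h1 h2
  have u1 := toG_mul N _ _ _ h1
  have u2 := toG_mul N _ _ _ h2
  rw [toG_one] at u1 u2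
  obtain ⟨g, hg⟩ := hcut ⟨toG N x, toG N x', u1, u2⟩ (toG_center N x cx)
  have hg' : ∃ n : ℕ, 0 < n ∧ toG N x ^ n = 1 := by
    obtain ⟨n, hn, hgn⟩ := (hT g).exists_pow_eq_one
    refine ⟨n * 2, by omega, ?_⟩
    have hgn2 : (MonoidAlgebra.of ℤ G g) ^ (n * 2) = 1 := by
      rw [pow_mul, ← map_pow, hgn, map_one, one_pow]
    rcases hg with hg | hg
    · exact (congrArg (· ^ (n * 2)) hg).trans hgn2
    · refine (congrArg (· ^ (n * 2)) hg).trans ?_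
      rw [Even.neg_pow ⟨n, by ring⟩, hgn2]
  obtain ⟨n, hn, hn1⟩ := hg'
  apply h3 n hn
  obtain ⟨w, hw1, hw2⟩ := gmat_pow_toG N x n
  rw [hn1, ← toG_one N] at hw2
  rw [kx, hw1, ← toG_injective N hw2, gmat_one]

open Polynomial in
theorem cut_splits (f : ℚ[X]) (hf : f ≠ 0)
    (h : ∀ g : ℚ[X], Irreducible g → g.Monic → g ∣ f → g.natDegree ≤ 1) : f.Splits := by
  induction f using WfDvdMonoid.induction_on_irreducible with
  | zero => exact absurd rfl hf
  | unit u hu =>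
    apply Splits.of_natDegree_le_one
    rw [natDegree_eq_zero_of_isUnit hu]; omega
  | mul a i ha hi ih =>
    refine Splits.mul ?_ (ih ha fun g h1 h2 h3 => h g h1 h2 (h3.mul_left _))
    apply Splits.of_natDegree_le_one
    have h1 : Associated (normalize i) i := normalize_associated i
    have := h (normalize i) (h1.symm.irreducible hi) (monic_normalize hi.ne_zero)
      (h1.dvd.trans (dvd_mul_right _ _))
    rwa [natDegree_eq_of_degree_eq degree_normalize] at this

open Polynomial in
theorem cut_int_roots {N : Type*} [Fintype N] [DecidableEq N] (Y : Matrix N N ℤ)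
    (hY : Y.transpose = Y) (hs : (minpoly ℚ (Y.map (Int.cast : ℤ → ℚ))).Splits) :
    ∃ Λ : Finset ℤ, aeval Y (∏ l ∈ Λ, (X - C l)) = 0 := by
  set Z := Y.map (Int.cast : ℤ → ℚ) with hZdef
  have hZ : Z.transpose = Z := by
    rw [hZdef, ← Matrix.transpose_map, hY]
  have hm : (minpoly ℚ Z).Monic := minpoly.monic (Matrix.isIntegral Z)
  have hnd : (minpoly ℚ Z).roots.Nodup :=
    nodup_roots (PerfectField.separable_iff_squarefree.2 (cut_minpoly_squarefree Z hZ))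
  have hroot : ∀ a ∈ (minpoly ℚ Z).roots, ∃ l : ℤ, (l : ℚ) = a := by
    intro a ha
    have h1 : IsRoot (minpoly ℚ Z) a := (mem_roots hm.ne_zero).1 ha
    have h2 : IsRoot Z.charpoly a := h1.dvd (Matrix.minpoly_dvd_charpoly Z)
    have h3 : Z.charpoly = Y.charpoly.map (Int.castRingHom ℚ) :=
      Matrix.charpoly_map Y (Int.castRingHom ℚ)
    have h4 : IsIntegral ℤ a := by
      refine ⟨Y.charpoly, Matrix.charpoly_monic Y, ?_⟩
      rw [h3, IsRoot, eval_map] at h2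
      exact h2
    obtain ⟨l, hl⟩ := IsIntegrallyClosed.isIntegral_iff.1 h4
    exact ⟨l, by simpa using hl⟩
  let Λ : Finset ℤ := (minpoly ℚ Z).roots.toFinset.image Int.floor 
  refine ⟨Λ, ?_⟩
  have hprod : minpoly ℚ Z = (∏ l ∈ Λ, (X - C l)).map (Int.castRingHom ℚ) := by
    rw [Polynomial.map_prod, Finset.prod_image]
    · conv_lhs => rw [hs.eq_prod_roots_of_monic hm]
      rw [Finset.prod_multiset_map_count] 
      refine Finset.prod_congr rfl fun a ha => ?_
      rw [Multiset.mem_toFinset] at ha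
      rw [Multiset.count_eq_one_of_mem hnd ha, pow_one]
      obtain ⟨l, rfl⟩ := hroot a ha
      simp
    · intro a ha b hb hab
      obtain ⟨l, rfl⟩ := hroot a (by simpa using ha)
      obtain ⟨m, rfl⟩ := hroot b (by simpa using hb)
      simpa using hab
  have h1 := map_aeval_eq_aeval_map (φ := Int.castRingHom ℚ)
    (ψ := (Int.castRingHom ℚ).mapMatrix (m := N)) (Subsingleton.elim _ _) (∏ l ∈ Λ, (X - C l)) Y
  rw [← hprod] at h1
  have h2 : (Int.castRingHom ℚ).mapMatrix (m := N) Y = Z := rfl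
  rw [h2, minpoly.aeval] at h1
  apply Matrix.map_injective (Int.cast_injective (α := ℚ))
  refine Eq.trans h1 ?_
  ext; simp

theorem gmat_mul_single {N : Type*} [Group N] [Fintype N] [DecidableEq N] {R : Type*} [CommRing R]
    (x : N → R) (b : N) : gmat x * gmat (Pi.single b 1) = gmat (fun n => x (n * b⁻¹)) := by
  rw [gmat_mul]
  congr 1
  ext n
  simp [Pi.single_apply]

theorem gmat_single_mul {N : Type*} [Group N] [Fintype N] [DecidableEq N] {R : Type*} [CommRing R]
    (x : N → R) (b : N) : gmat (Pi.single b 1) * gmat x = gmat (fun n => x (b⁻¹ * n)) := by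
  rw [gmat_mul]
  congr 1
  ext n
  rw [Finset.sum_eq_single (b⁻¹ * n)]
  · simp
  · intro k _ hk
    rw [Pi.single_eq_of_ne, zero_mul]
    rintro rfl
    apply hk; simp
  · simp

theorem gmat_single_pow {N : Type*} [Group N] [Fintype N] [DecidableEq N] {R : Type*} [CommRing R]
    (b : N) (m : ℕ) : gmat (Pi.single b (1 : R)) ^ m = gmat (Pi.single (b ^ m) 1) := by
  induction m with
  | zero => rw [pow_zero, pow_zero, gmat_one]
  | succ m ih =>
    rw [pow_succ, ih, gmat_mul_single]
    congr 1
    ext n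
    simp [Pi.single_apply, pow_succ, mul_inv_eq_iff_eq_mul]

open Polynomial in
theorem cut_mod_prime {N : Type*} [Fintype N] [DecidableEq N] (Y : Matrix N N ℤ) (Λ : Finset ℤ)
    (h : aeval Y (∏ l ∈ Λ, (X - C l)) = 0) (q : ℕ) [Fact q.Prime]
    (hq : ∀ l ∈ Λ, ∀ m ∈ Λ, l ≠ m → (l : ZMod q) ≠ m) :
    (Y.map (Int.cast : ℤ → ZMod q)) ^ q = Y.map (Int.cast : ℤ → ZMod q) := by
  have h1 := map_aeval_eq_aeval_map (φ := Int.castRingHom (ZMod q))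
    (ψ := (Int.castRingHom (ZMod q)).mapMatrix (m := N)) (Subsingleton.elim _ _)
    (∏ l ∈ Λ, (X - C l)) Y
  rw [h, map_zero, Polynomial.map_prod] at h1
  have h2 : (Int.castRingHom (ZMod q)).mapMatrix (m := N) Y = Y.map (Int.cast : ℤ → ZMod q) := rfl
  rw [h2] at h1
  have h3 : ∏ l ∈ Λ, (X - C l).map (Int.castRingHom (ZMod q)) ∣ (X ^ q - X : (ZMod q)[X]) := by
    apply Finset.prod_dvd_of_coprime
    · intro l hl m hm hlm
      simp only [Function.onFun, Polynomial.map_sub, map_X, map_C]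
      apply isCoprime_X_sub_C_of_isUnit_sub
      rw [isUnit_iff_ne_zero, sub_ne_zero]
      exact hq l hl m hm hlm
    · intro l _
      simp only [Polynomial.map_sub, map_X, map_C]
      rw [dvd_iff_isRoot]
      simp [IsRoot, ZMod.pow_card]
  obtain ⟨c, hc⟩ := h3
  have h4 := congrArg (aeval (Y.map (Int.cast : ℤ → ZMod q))) hc
  rw [map_mul, ← h1, zero_mul, map_sub, map_pow, aeval_X, sub_eq_zero] at h4
  exact h4

theorem cut_trace {N : Type*} [Group N] [Fintype N] [DecidableEq N] (z : N → ℤ)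
    (hc : ∀ g n : N, z (g * n * g⁻¹) = z n) (q : ℕ) [Fact q.Prime] (hN : Fintype.card N < q)
    (hZ : ((gmat z).map (Int.cast : ℤ → ZMod q)) ^ q = (gmat z).map (Int.cast : ℤ → ZMod q))
    (a : N) : (z (a ^ q) : ZMod q) = z a := by
  set y : N → ZMod q := fun n => (z n : ZMod q) with hy
  have e : (gmat z).map (Int.cast : ℤ → ZMod q) = gmat y := rfl
  rw [e] at hZ
  have hcomm : Commute (gmat y) (gmat (Pi.single a⁻¹ 1)) := by
    rw [Commute, SemiconjBy, gmat_mul_single, gmat_single_mul]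
    congr 1
    ext n
    simp only [hy, inv_inv]
    congr 1
    rw [← hc a (n * a)]
    congr 1
    group
  have htr : ∀ m : ℕ, Matrix.trace (gmat y * gmat (Pi.single a⁻¹ 1) ^ m) =
      (Fintype.card N : ZMod q) * y (a ^ m) := by
    intro m
    rw [gmat_single_pow, gmat_mul_single, Matrix.trace]
    simp [gmat_apply]
  have h1 := ZMod.trace_pow_card (gmat y * gmat (Pi.single a⁻¹ 1))
  rw [ZMod.pow_card, hcomm.mul_pow, hZ, htr q] at h1
  have h2 := htr 1
  rw [pow_one, pow_one] at h2
  rw [h2] at h1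
  refine mul_left_cancel₀ ?_ h1
  rw [Ne, ZMod.natCast_eq_zero_iff]
  exact Nat.not_dvd_of_pos_of_lt Fintype.card_pos hN

theorem powConj_of_cut {p : ℕ} (hp : p.Prime) {G : Type*} [Group G] (hG : IsPGroup p G)
    (hcut : IsCutGroup G) (j : ℕ) (hj : ¬ p ∣ j) : PowConj G j := by
  classical
  intro a ha
  have hT : ∀ g : G, IsOfFinOrder g := by
    intro g
    obtain ⟨k, hk⟩ := isPGroup_iff_pow_pow_eq_one.1 hG g
    exact isOfFinOrder_iff_pow_eq_one.2 ⟨p ^ k, pow_pos hp.pos _, hk⟩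
  let S : Set G := {h | IsConj a h ∨ IsConj a⁻¹ h}
  have hinv : ∀ {x y : G}, IsConj x y → IsConj x⁻¹ y⁻¹ := by
    intro x y h
    obtain ⟨c, rfl⟩ := isConj_iff.1 h
    exact isConj_iff.2 ⟨c, by group⟩
  have hSc : ∀ g : G, ∀ s, s ∈ S ↔ g * s * g⁻¹ ∈ S := by
    intro g s
    have h : IsConj s (g * s * g⁻¹) := isConj_iff.2 ⟨g, rfl⟩
    constructor
    · rintro (h1 | h1)
      · exact Or.inl (h1.trans h)
      · exact Or.inr (h1.trans h)
    · rintro (h1 | h1)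
      · exact Or.inl (h1.trans h.symm)
      · exact Or.inr (h1.trans h.symm)
  have hSi : ∀ s, s ∈ S → s⁻¹ ∈ S := by
    rintro s (h | h)
    · exact Or.inr (hinv h)
    · exact Or.inl (by simpa using hinv h)
  have hSf : S.Finite := by
    have h1 : S ⊆ {h | IsConj a h} ∪ Set.image (fun x => x⁻¹) {h | IsConj a h} := by
      rintro s (h | h)
      · exact Or.inl h
      · exact Or.inr ⟨s⁻¹, by simpa using hinv h, by simp⟩
    exact (ha.1.union (ha.1.image _)).subset h1
  let N := Subgroup.closure S
  have hNn : N.Normal := cut_closure_normal S fun g s hs => (hSc g s).1 hs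
  have hNf : Finite N := cut_finite_closure hT S hSf fun g s hs => (hSc g s).1 hs
  have : Fintype N := Fintype.ofFinite N
  let z : N → ℤ := fun n => if (n : G) ∈ S then 1 else 0
  have hz : ∀ n, z n⁻¹ = z n := by
    intro n
    have : ((n⁻¹ : N) : G) ∈ S ↔ (n : G) ∈ S := ⟨fun h => by simpa using hSi _ h, fun h => hSi _ h⟩
    simp only [z, this]
  have hc : ∀ (g : G) (n : N), z (MulAut.conjNormal g n) = z n := by
    intro g n
    simp only [z, MulAut.conjNormal_apply, ← hSc]
  have hsplit := cut_splits (minpoly ℚ ((gmat z).map (Int.cast : ℤ → ℚ)))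
    (minpoly.ne_zero (Matrix.isIntegral _))
    fun g h1 h2 h3 => cut_degree_le hcut hT N z hz hc g h1 h2 h3
  obtain ⟨Λ, hΛ⟩ := cut_int_roots (gmat z) (by rw [gmat_transpose]; simp only [hz]) hsplit
  have hcop : j.Coprime (orderOf a) := by
    obtain ⟨k, hk⟩ := isPGroup_iff_pow_pow_eq_one.1 hG a
    refine Nat.Coprime.coprime_dvd_right (orderOf_dvd_of_pow_eq_one hk) ?_
    exact (Nat.Coprime.pow_left k ((Nat.Prime.coprime_iff_not_dvd hp).2 hj)).symm
  obtain ⟨q, hqB, hqp, hqj⟩ := Nat.forall_exists_prime_gt_and_modEq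
    (Fintype.card N + 2 * ∑ l ∈ Λ, l.natAbs) (hT a).orderOf_pos.ne' hcop
  have : Fact q.Prime := ⟨hqp⟩
  have hZ := cut_mod_prime (gmat z) Λ hΛ q (by
    intro l hl m hm hlm h
    have h1 : l.natAbs ≤ ∑ l ∈ Λ, l.natAbs :=
      Finset.single_le_sum (f := fun l : ℤ => l.natAbs) (fun _ _ => Nat.zero_le _) hl
    have h2 : m.natAbs ≤ ∑ l ∈ Λ, l.natAbs :=
      Finset.single_le_sum (f := fun l : ℤ => l.natAbs) (fun _ _ => Nat.zero_le _) hm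
    rw [ZMod.intCast_eq_intCast_iff_dvd_sub] at h
    have h3 := Int.natAbs_le_of_dvd_ne_zero h (by omega)
    omega)
  have haS : a ∈ S := Or.inl (IsConj.refl a)
  let a' : N := ⟨a, Subgroup.subset_closure haS⟩
  have ht := cut_trace z (fun g n => by
    have := hc (g : G) n
    rwa [show MulAut.conjNormal (g : G) n = g * n * g⁻¹ from Subtype.ext (by simp)] at this)
    q (by omega) hZ a'
  have hza : z a' = 1 := if_pos haS
  have haq : ((a' ^ q : N) : G) = a ^ j := by
    change a ^ q = a ^ j
    exact pow_eq_pow_iff_modEq.2 hqj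
  have hmem : a ^ j ∈ S := by
    by_contra hn
    have : z (a' ^ q) = 0 := if_neg (by rwa [haq])
    rw [this, hza] at ht
    simp at ht
  rw [zpow_natCast]
  rcases hmem with h | h
  · exact Or.inl h.symm
  · exact Or.inr h.symm

/-- A (possibly infinite) `p`-group `G` is a cut-group if and only if either
`p = 2` and `a³ ∼ a^{±1}` for all `a ∈ Φ⁺(G)`, or `p = 3` and `a² ∼ a⁻¹` for all
`a ∈ Φ⁺(G)`, or `Φ⁺(G) = {1}`. -/
theorem isCutGroup_pGroup_iff {p : ℕ} (hp : p.Prime) {G : Type*} [Group G]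
    (hG : IsPGroup p G) :
    IsCutGroup G ↔
      (p = 2 ∧ ∀ a ∈ FCTorsion G, IsConj (a ^ 3) a ∨ IsConj (a ^ 3) a⁻¹) ∨
      (p = 3 ∧ ∀ a ∈ FCTorsion G, IsConj (a ^ 2) a⁻¹) ∨
      FCTorsion G = {1} := by
  constructor
  · intro h
    exact cond_of_powConj hp hG fun j hj => powConj_of_cut hp hG h j hj
  · intro H
    exact cut_of_powConj hp hG fun j hj => powConj_all hp hG H j hj
end

section
/- Let G be a group, let U = U(ℤ[G]) be the unit group of ℤ[G], and let Z_i(U) denote the i-th term of the upper central series of U. Suppose that either the center Z(G) of G has finite exponent, or G is generated by a set of torsion elements of bounded order (there exists m ≥ 1 and a generating set X of G with x^m = 1 for all x ∈ X). Then for every i ≥ 2 the quotient Z_i(U)/Z_{i−1}(U) has finite exponent; that is, there exists a positive integer m such that u^m ∈ Z_{i−1}(U) for every u ∈ Z_i(U). -/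
open MonoidAlgebra

section GroupPart

lemma pow_conj_aux {Q : Type*} [Group Q] {u x c : Q} (h : u * x = c * x * u)
    (hc : Commute c u) (m : ℕ) : u ^ m * x = c ^ m * x * u ^ m := by
  induction m with
  | zero => simp
  | succ m ih =>
    have h1 : u * c ^ m = c ^ m * u := ((hc.pow_left m).eq).symm
    calc u ^ (m+1) * x = u * (u ^ m * x) := by rw [pow_succ', mul_assoc]
      _ = (u * c ^ m) * x * u ^ m := by rw [ih]; simp only [mul_assoc]
      _ = c ^ m * (u * x) * u ^ m := by rw [h1]; simp only [mul_assoc]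
      _ = c ^ (m+1) * x * u ^ (m+1) := by
        rw [h, pow_succ c, pow_succ' u]; simp only [mul_assoc]

lemma ucs_aux {U : Type*} [Group U] (m : ℕ)
    (h : ∀ u ∈ Subgroup.upperCentralSeries U 2, u ^ m ∈ Subgroup.upperCentralSeries U 1) (i : ℕ) :
    ∀ u ∈ Subgroup.upperCentralSeries U (i + 2), u ^ m ∈ Subgroup.upperCentralSeries U (i + 1) := by
  induction i with
  | zero => exact h
  | succ i ih =>
    intro u hu
    rw [Subgroup.mem_upperCentralSeries_succ_iff] at hu ⊢
    intro x
    have hc := hu x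
    have hcm := ih _ hc
    rw [Subgroup.mem_upperCentralSeries_succ_iff] at hc
    rw [commutatorElement_def] at *
    set c := u * x * u⁻¹ * x⁻¹ with hcdef
    let q := QuotientGroup.mk' (Subgroup.upperCentralSeries U (i+1))
    have hq : ∀ y, q y = 1 ↔ y ∈ Subgroup.upperCentralSeries U (i+1) := fun y =>
      QuotientGroup.eq_one_iff y
    have hcu : Commute (q c) (q u) := by
      have := (hq _).2 (hc u)
      rw [map_commutatorElement, commutatorElement_eq_one_iff_commute] at this
      exact this
    have h1 : q u * q x = q c * q x * q u := by
      rw [← map_mul, ← map_mul, ← map_mul, hcdef]; congr 1; group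
    have h2 := pow_conj_aux h1 hcu m
    have h3 : q c ^ m = 1 := by rw [← map_pow]; exact (hq _).2 hcm
    rw [← hq]
    rw [h3, one_mul] at h2
    simp only [map_mul, map_inv, map_pow]
    rw [h2]; group

end GroupPart

section RingPart

variable {G : Type*} [Group G]

/-- the l1 norm -/
def gN (x : MonoidAlgebra ℤ G) : ℤ := ∑ g ∈ x.coeff.support, |x.coeff g|

/-- the square of the l2 norm -/
def gQ (x : MonoidAlgebra ℤ G) : ℤ := ∑ g ∈ x.coeff.support, (x.coeff g) ^ 2

/-- the canonical involution -/
def gStar (x : MonoidAlgebra ℤ G) : MonoidAlgebra ℤ G :=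
  ofCoeff (Finsupp.equivMapDomain (Equiv.inv G) x.coeff)

lemma gN_eq (x : MonoidAlgebra ℤ G) {s : Finset G} (hs : x.coeff.support ⊆ s) :
    gN x = ∑ g ∈ s, |x.coeff g| := by
  refine Finset.sum_subset hs fun g _ hg => ?_
  simpa using hg

lemma gN_nonneg (x : MonoidAlgebra ℤ G) : 0 ≤ gN x :=
  Finset.sum_nonneg fun _ _ => abs_nonneg _

lemma gN_zero : gN (0 : MonoidAlgebra ℤ G) = 0 := by simp [gN]

lemma gN_single (g : G) (r : ℤ) : gN (single g r) = |r| := by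
  rw [gN_eq (s := {g})]
  · simp
  · rw [coeff_single]; exact Finsupp.support_single_subset

lemma gN_add (x y : MonoidAlgebra ℤ G) : gN (x + y) ≤ gN x + gN y := by
  classical
  rw [gN_eq (x + y) (s := x.coeff.support ∪ y.coeff.support),
    gN_eq x (s := x.coeff.support ∪ y.coeff.support),
    gN_eq y (s := x.coeff.support ∪ y.coeff.support), ← Finset.sum_add_distrib]
  · exact Finset.sum_le_sum fun g _ => by simpa using abs_add_le _ _
  · exact Finset.subset_union_right
  · exact Finset.subset_union_left
  · rw [coeff_add]; exact Finsupp.support_add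

lemma gN_sum {ι : Type*} (s : Finset ι) (f : ι → MonoidAlgebra ℤ G) :
    gN (∑ i ∈ s, f i) ≤ ∑ i ∈ s, gN (f i) :=
  Finset.le_sum_of_subadditive _ gN_zero.le gN_add s f

lemma gN_mul (x y : MonoidAlgebra ℤ G) : gN (x * y) ≤ gN x * gN y := by
  rw [mul_def, Finsupp.sum]
  refine (gN_sum _ _).trans ?_
  rw [gN, Finset.sum_mul]
  refine Finset.sum_le_sum fun g _ => ?_
  rw [Finsupp.sum]
  refine (gN_sum _ _).trans ?_
  rw [gN, Finset.mul_sum]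
  refine Finset.sum_le_sum fun h _ => ?_
  rw [gN_single, abs_mul]

lemma gQ_le (x : MonoidAlgebra ℤ G) : gQ x ≤ gN x ^ 2 := by
  have : gQ x = ∑ g ∈ x.coeff.support, |x.coeff g| ^ 2 := by simp [gQ]
  rw [this]
  exact Finset.sum_sq_le_sq_sum_of_nonneg fun _ _ => abs_nonneg _

lemma coeff_gStar (x : MonoidAlgebra ℤ G) (g : G) : (gStar x).coeff g = x.coeff g⁻¹ := by
  simp [gStar, Finsupp.equivMapDomain_apply]

lemma gStar_add (x y : MonoidAlgebra ℤ G) : gStar (x + y) = gStar x + gStar y := by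
  ext g; simp [coeff_gStar]

lemma gStar_single (g : G) (r : ℤ) : gStar (single g r) = single g⁻¹ r := by
  classical
  ext h; simp [coeff_gStar, Finsupp.single_apply, inv_eq_iff_eq_inv]

lemma gStar_zero : gStar (0 : MonoidAlgebra ℤ G) = 0 := by
  ext g; simp [coeff_gStar]

lemma gStar_mul (x y : MonoidAlgebra ℤ G) : gStar (x * y) = gStar y * gStar x := by
  induction x using MonoidAlgebra.induction_linear with
  | zero => simp [gStar_zero]
  | add a b ha hb => simp [add_mul, mul_add, gStar_add, ha, hb]
  | single g r =>
    induction y using MonoidAlgebra.induction_linear with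
    | zero => simp [gStar_zero]
    | add a b ha hb => simp [add_mul, mul_add, gStar_add, ha, hb]
    | single h s => simp [gStar_single, single_mul_single, mul_comm]

lemma gStar_gStar (x : MonoidAlgebra ℤ G) : gStar (gStar x) = x := by
  ext g; simp [coeff_gStar]

lemma trace_mul_gStar (x : MonoidAlgebra ℤ G) : (x * gStar x).coeff 1 = gQ x := by
  rw [coeff_mul_apply_left, Finsupp.sum, gQ]
  refine Finset.sum_congr rfl fun g _ => ?_
  rw [coeff_gStar]; simp [sq]

lemma gQ_nonneg (x : MonoidAlgebra ℤ G) : 0 ≤ gQ x := Finset.sum_nonneg fun _ _ => sq_nonneg _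

lemma sq_coeff_le_gQ (x : MonoidAlgebra ℤ G) (g : G) : (x.coeff g) ^ 2 ≤ gQ x := by
  by_cases hg : g ∈ x.coeff.support
  · exact Finset.single_le_sum (f := fun g => (x.coeff g) ^ 2) (fun _ _ => sq_nonneg _) hg
  · have : x.coeff g = 0 := by simpa using hg
    rw [this]; simpa using gQ_nonneg x

lemma gQ_sq {c : MonoidAlgebra ℤ G} (hc : ∀ y, c * y = y * c) : gQ c ^ 2 ≤ gQ (c ^ 2) := by
  have h1 : gQ (c ^ 2) = gQ (c * gStar c) := by
    rw [← trace_mul_gStar, ← trace_mul_gStar, sq, gStar_mul, gStar_mul, gStar_gStar]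
    congr 2
    calc c * c * (gStar c * gStar c) = c * (c * (gStar c * gStar c)) := by rw [mul_assoc]
      _ = c * ((gStar c * gStar c) * c) := by rw [hc (gStar c * gStar c)]
      _ = c * gStar c * (gStar c * c) := by simp only [mul_assoc]
      _ = _ := by rw [← hc (gStar c)]
  rw [h1, ← trace_mul_gStar c]
  exact sq_coeff_le_gQ _ _

lemma gQ_pow {c : MonoidAlgebra ℤ G} (hc : ∀ y, c * y = y * c) (k : ℕ) :
    gQ c ^ (2 ^ k) ≤ gQ (c ^ (2 ^ k)) := by
  induction k with
  | zero => simp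
  | succ k ih =>
    have hk : ∀ y, c ^ (2 ^ k) * y = y * c ^ (2 ^ k) := fun y =>
      (Commute.pow_left (hc y) _).eq
    rw [pow_succ 2 k, pow_mul, pow_mul]
    exact (pow_le_pow_left₀ (pow_nonneg (gQ_nonneg c) _) ih 2).trans (gQ_sq hk)

lemma trivial_of_bounded {c : MonoidAlgebra ℤ G} (hc : ∀ y, c * y = y * c) (B : ℤ)
    (hB : ∀ n : ℕ, gN (c ^ n) ≤ B) : gQ c ≤ 1 := by
  by_contra hlt
  have h2 : 2 ≤ gQ c := by omega
  have key : ∀ k : ℕ, (k : ℤ) < B ^ 2 := fun k => by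
    have h1 : ((2 ^ k : ℕ) : ℤ) < 2 ^ (2 ^ k) := by exact_mod_cast (2 ^ k).lt_two_pow_self
    have h0 : (k : ℤ) < ((2 ^ k : ℕ) : ℤ) := by exact_mod_cast k.lt_two_pow_self
    have h3 : (2 : ℤ) ^ (2 ^ k) ≤ gQ c ^ (2 ^ k) := pow_le_pow_left₀ (by norm_num) h2 _
    have h4 := gQ_pow hc k
    have h5 := gQ_le (c ^ (2 ^ k))
    have h6 := pow_le_pow_left₀ (gN_nonneg (c ^ (2 ^ k))) (hB _) 2
    linarith
  have := key (B ^ 2).toNat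
  omega

lemma exists_single {c : MonoidAlgebra ℤ G} (h0 : c ≠ 0) (h : gQ c ≤ 1) :
    ∃ g r, r ^ 2 = 1 ∧ c = single g r := by
  classical
  have hcard : (c.coeff.support.card : ℤ) ≤ gQ c := by
    rw [Finset.card_eq_sum_ones, Nat.cast_sum, gQ]
    refine Finset.sum_le_sum fun g hg => ?_
    have : c.coeff g ≠ 0 := by simpa using hg
    have : 0 < (c.coeff g) ^ 2 := by positivity
    push_cast; omega
  have hne : c.coeff ≠ 0 := by simpa using h0
  have hc1 : c.coeff.support.card ≤ 1 := by omega
  obtain ⟨g, r, hgr⟩ := Finsupp.card_support_le_one'.1 hc1 |>.imp fun g h => h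
  have hcs : c = single g r := by ext1; simpa using hgr
  have hr : r ≠ 0 := by rintro rfl; simp [hcs] at h0
  refine ⟨g, r, ?_, hcs⟩
  have h1 := (sq_coeff_le_gQ c g).trans h
  rw [hgr] at h1
  simp only [Finsupp.single_eq_same] at h1
  have : 0 < r ^ 2 := by positivity
  omega

/-- group elements as units -/
noncomputable def gU : G →* (MonoidAlgebra ℤ G)ˣ := Units.map (of ℤ G) |>.comp (toUnits (G := G)).toMonoidHom

lemma gU_val (g : G) : ((gU g : (MonoidAlgebra ℤ G)ˣ) : MonoidAlgebra ℤ G) = single g 1 := rfl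

lemma comm_all {x : MonoidAlgebra ℤ G} (h : ∀ g : G, x * single g 1 = single g 1 * x)
    (y : MonoidAlgebra ℤ G) : x * y = y * x := by
  induction y using MonoidAlgebra.induction_linear with
  | zero => simp
  | add a b ha hb => rw [mul_add, add_mul, ha, hb]
  | single g r =>
    have : single g r = r • (single g 1 : MonoidAlgebra ℤ G) := by simp
    rw [this, mul_smul_comm, smul_mul_assoc, h]

lemma unit_central_iff {u : (MonoidAlgebra ℤ G)ˣ} (h : ∀ g : G, Commute u (gU g)) :
    u ∈ Subgroup.center (MonoidAlgebra ℤ G)ˣ := by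
  rw [Subgroup.mem_center_iff]
  intro v
  refine Units.ext ?_
  refine (comm_all (fun g => ?_) _).symm
  have := congrArg Units.val (h g).eq
  simpa [gU_val] using this

lemma central_comm {c : (MonoidAlgebra ℤ G)ˣ} (h : c ∈ Subgroup.center (MonoidAlgebra ℤ G)ˣ)
    (y : MonoidAlgebra ℤ G) : (c : MonoidAlgebra ℤ G) * y = y * c := by
  refine comm_all (fun g => ?_) y
  have := congrArg Units.val ((Subgroup.mem_center_iff.1 h) (gU g))
  simpa [gU_val] using this.symm

lemma gN_four (x y : MonoidAlgebra ℤ G) (g h : G) :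
    gN (x * single g 1 * y * single h 1) ≤ gN x * gN y := by
  have hv := gN_nonneg y
  have h1 := gN_mul x (single g 1)
  have h2 := gN_mul (x * single g 1) y
  have h3 := gN_mul (x * single g 1 * y) (single h 1)
  rw [gN_single, abs_one, mul_one] at h1 h3
  exact h3.trans (h2.trans (mul_le_mul_of_nonneg_right h1 hv))

lemma commutator_pow_center {m : ℕ} (hm : ∀ g ∈ Subgroup.center G, g ^ m = 1)
    {u : (MonoidAlgebra ℤ G)ˣ} {g : G}
    (hc : u * gU g * u⁻¹ * (gU g)⁻¹ ∈ Subgroup.center (MonoidAlgebra ℤ G)ˣ) :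
    (u * gU g * u⁻¹ * (gU g)⁻¹) ^ (2 * m) = 1 := by
  set c := u * gU g * u⁻¹ * (gU g)⁻¹ with hcdef
  have hcc : ∀ v, v * c = c * v := Subgroup.mem_center_iff.1 hc
  have hcomm := central_comm hc
  have hpow : ∀ n : ℕ, c ^ n = u * gU (g ^ n) * u⁻¹ * gU (g ^ n)⁻¹ := fun n => by
    have h1 : u * gU g * u⁻¹ = c * gU g := by rw [hcdef]; group
    have h2 : u * (gU g) ^ n * u⁻¹ = c ^ n * (gU g) ^ n := by
      rw [← conj_pow, h1, Commute.mul_pow]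
      exact (hcc _).symm
    rw [map_inv, map_pow, h2]; group
  have hb : gQ (c : MonoidAlgebra ℤ G) ≤ 1 := by
    refine trivial_of_bounded hcomm (gN (u : MonoidAlgebra ℤ G) * gN (↑u⁻¹ : MonoidAlgebra ℤ G)) ?_
    intro n
    rw [← Units.val_pow_eq_pow_val, hpow n]
    simp only [Units.val_mul, gU_val]
    exact gN_four _ _ _ _
  obtain ⟨z, r, hr, hz⟩ := exists_single (Units.ne_zero c) hb
  have hzc : z ∈ Subgroup.center G := by
    rw [Subgroup.mem_center_iff]
    intro k
    have h1 := hcomm (single k 1)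
    rw [hz, single_mul_single, single_mul_single, one_mul, mul_one, single_left_inj] at h1
    · exact h1.symm
    · rintro rfl; norm_num at hr
  refine Units.ext ?_
  rw [Units.val_pow_eq_pow_val, hz, single_pow, pow_mul r, hr, mul_comm 2 m, pow_mul, hm z hzc]
  simp [one_def]

end RingPart

/-- Let `U = U(ℤ[G])` be the unit group of the integral group ring of `G`.  If the center
of `G` has finite exponent, or `G` is generated by a set of torsion elements of bounded
order, then for every `i ≥ 2` the quotient `Z_i(U)/Z_{i−1}(U)` of consecutive terms of the
upper central series of `U` has finite exponent. -/
theorem upperCentralSeries_quotient_finite_exponent {G : Type*} [Group G]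
    (h : (∃ m : ℕ, 0 < m ∧ ∀ g ∈ Subgroup.center G, g ^ m = 1) ∨
      (∃ m : ℕ, 0 < m ∧ ∃ X : Set G, Subgroup.closure X = ⊤ ∧ ∀ x ∈ X, x ^ m = 1)) :
    ∀ i : ℕ, 2 ≤ i →
      ∃ m : ℕ, 0 < m ∧
        ∀ u ∈ upperCentralSeries (MonoidAlgebra ℤ G)ˣ i,
          u ^ m ∈ upperCentralSeries (MonoidAlgebra ℤ G)ˣ (i - 1) := by
  change ∀ i : ℕ, 2 ≤ i →
      ∃ m : ℕ, 0 < m ∧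
        ∀ u ∈ Subgroup.upperCentralSeries (MonoidAlgebra ℤ G)ˣ i,
          u ^ m ∈ Subgroup.upperCentralSeries (MonoidAlgebra ℤ G)ˣ (i - 1)
  suffices H : ∃ m : ℕ, 0 < m ∧ ∀ u ∈ Subgroup.upperCentralSeries (MonoidAlgebra ℤ G)ˣ 2,
      u ^ m ∈ Subgroup.upperCentralSeries (MonoidAlgebra ℤ G)ˣ 1 by
    obtain ⟨m, hm, H⟩ := H
    intro i hi
    obtain ⟨j, rfl⟩ := Nat.exists_eq_add_of_le' hi
    exact ⟨m, hm, ucs_aux m H j⟩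
  have conj : ∀ u ∈ Subgroup.upperCentralSeries (MonoidAlgebra ℤ G)ˣ 2, ∀ g : G,
      u * gU g * u⁻¹ * (gU g)⁻¹ ∈ Subgroup.center (MonoidAlgebra ℤ G)ˣ := by
    intro u hu g
    rw [Subgroup.mem_upperCentralSeries_succ_iff] at hu
    have := hu (gU g)
    rwa [Subgroup.upperCentralSeries_one, commutatorElement_def] at this
  have powc : ∀ u ∈ Subgroup.upperCentralSeries (MonoidAlgebra ℤ G)ˣ 2, ∀ (g : G) (m : ℕ),
      (u * gU g * u⁻¹ * (gU g)⁻¹) ^ m = 1 → Commute (u ^ m) (gU g) := by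
    intro u hu g m h1
    have hc := Subgroup.mem_center_iff.1 (conj u hu g)
    have h2 := pow_conj_aux (u := u) (x := gU g) (c := u * gU g * u⁻¹ * (gU g)⁻¹)
      (by group) (hc u).symm m
    rw [h1, one_mul] at h2
    exact h2
  rcases h with ⟨m, hm, h⟩ | ⟨m, hm, X, hX, h⟩
  · refine ⟨2 * m, by omega, fun u hu => ?_⟩
    rw [Subgroup.upperCentralSeries_one]
    exact unit_central_iff fun g => powc u hu g _ (commutator_pow_center h (conj u hu g))
  · refine ⟨m, hm, fun u hu => ?_⟩
    rw [Subgroup.upperCentralSeries_one]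
    refine unit_central_iff fun g => ?_
    have hg : g ∈ Subgroup.closure X := by rw [hX]; trivial
    induction hg using Subgroup.closure_induction with
    | mem x hx =>
      refine powc u hu x m ?_
      have hc := Subgroup.mem_center_iff.1 (conj u hu x)
      set c := u * gU x * u⁻¹ * (gU x)⁻¹ with hcdef
      have h1 : u * gU x * u⁻¹ = c * gU x := by rw [hcdef]; group
      have h2 : u * (gU x) ^ m * u⁻¹ = c ^ m * (gU x) ^ m := by
        rw [← conj_pow, h1, Commute.mul_pow]
        exact (hc _).symm
      rw [← map_pow, h x hx] at h2
      simpa using h2.symm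
    | one => simp
    | mul x y _ _ hx hy => rw [map_mul]; exact hx.mul_right hy
    | inv x _ hx => rw [map_inv]; exact hx.inv_right
end
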